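/- Let k be an algebraically closed field of characteristic 0, N ≥ 7, and let λ be an orthogonal partition of N with λ₁ ≥ 3 whose number of parts p satisfies N − p ≥ ⌊N/2⌋. Then the Zariski closure in Mat_N(k) of the set {x + y : x, y ∈ O_λ ∩ so_N(k)} equals so_N(k); that is, the conical secant variety of this nilpotent orbit is all of so_N. -/

import Mathlib

open Matrix

noncomputable section

/-- The Zariski closure of a set of `N × N` matrices. -/
def zClosure {k : Type*} [CommRing k] {N : ℕ}
    (S : Set (Matrix (Fin N) (Fin N) k)) : Set (Matrix (Fin N) (Fin N) k) :=
  {M | ∀ P : MvPolynomial (Fin N × Fin N) k,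
      (∀ x ∈ S, MvPolynomial.eval (fun q => x q.1 q.2) P = 0) →
      MvPolynomial.eval (fun q => M q.1 q.2) P = 0}

/-- The set of nilpotent matrices of Jordan type `lam`. -/
def jordanOrbit (k : Type*) [Field k] (N : ℕ) {p : ℕ} (lam : Fin p → ℕ) :
    Set (Matrix (Fin N) (Fin N) k) :=
  {M | ∀ i : ℕ, 1 ≤ i → (M ^ i).rank = ∑ l, (lam l - i)}

/-- The orthogonal Lie algebra `so_N(k)`: skew-symmetric matrices. -/
def soSet (k : Type*) [CommRing k] (N : ℕ) : Set (Matrix (Fin N) (Fin N) k) :=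
  {M | Mᵀ = -M}

/-- A partition is orthogonal if each (nonzero) even part occurs with even multiplicity. -/
def IsOrthogonalParts {p : ℕ} (lam : Fin p → ℕ) : Prop :=
  ∀ m : ℕ, 0 < m → Even m → Even ((Finset.univ.filter (fun l => lam l = m)).card)

/-!
The closure is all of `so_N` as soon as the orbit contains `x` and `y` which no nonzero element of
`so_N` centralizes simultaneously: the common centralizer is the orthogonal complement of
`[x, so_N] + [y, so_N]`, the sum of the tangent spaces of the orbit at `x` and `y`.

Such a pair is glued from orthogonal blocks, each made of one odd part `2 * m + 1`, any even number
of parts `2` and up to `2 * m - 1` parts `1`. On each block a word in `x` and `y` has rank one, with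
a cyclic eigenvector for a nonzero eigenvalue, so that only scalars commute with both, and
no nonzero scalar is skew. Rescaling the pair block by block makes these eigenvalues distinct, and
then no nonzero map intertwines two blocks.

Two even parts `2 * m + 2` arise by deforming two odd parts `2 * m + 1` together with a part `3`
or two parts `1`: the deformed pair depends polynomially on a parameter, and having trivial
centralizer is an open condition. Finally `N - p ≥ ⌊N / 2⌋` says that at most `1 + ∑ (λ_l - 2)`
parts are `1`, the sum being over the parts at least `3`; the blocks absorb exactly that many.
-/

section Openness

variable {k E F : Type*} [Field k]

lemma finite_setOf_det_sum_pow_smul_eq_zero {ι : Type*} [Fintype ι] [DecidableEq ι] (d : ℕ)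
    (M : ℕ → Matrix ι ι k) (h0 : (M 0).det ≠ 0) :
    {t : k | (∑ i ∈ Finset.range (d + 1), t ^ i • M i).det = 0}.Finite := by
  let Q : Matrix ι ι (Polynomial k) :=
    ∑ i ∈ Finset.range (d + 1), (Polynomial.X : Polynomial k) ^ i • (M i).map Polynomial.C
  have hQ (t : k) : Q.det.eval t = (∑ i ∈ Finset.range (d + 1), t ^ i • M i).det := by
    rw [← Polynomial.coe_evalRingHom, RingHom.map_det]
    congr 1
    ext i j
    simp [Q, Matrix.sum_apply, mul_comm (t ^ _)]
  have hQ0 : Q.det ≠ 0 := by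
    intro h
    have hdet := hQ 0
    rw [h, Finset.sum_range_succ'] at hdet
    exact h0 (by simpa using hdet.symm)
  refine (Polynomial.finite_setOfPred_isRoot hQ0).subset fun t ht => ?_
  exact (hQ t).trans ht

variable [AddCommGroup E] [Module k E] [FiniteDimensional k E] [AddCommGroup F] [Module k F]

lemma finite_setOf_not_injective_sum_pow_smul (d : ℕ) (T : ℕ → E →ₗ[k] F)
    (h0 : Function.Injective (T 0)) :
    {t : k | ¬ Function.Injective
      (∑ i ∈ Finset.range (d + 1), t ^ i • T i : E →ₗ[k] F)}.Finite := by
  obtain ⟨K, hK⟩ := (T 0).exists_leftInverse_of_injective (LinearMap.ker_eq_bot.2 h0)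
  let b := Module.finBasis k E
  let M (i : ℕ) := LinearMap.toMatrix b b (K ∘ₗ T i)
  refine (finite_setOf_det_sum_pow_smul_eq_zero d M (by simp [M, hK])).subset fun t ht => ?_
  have hM : ∑ i ∈ Finset.range (d + 1), t ^ i • M i =
      LinearMap.toMatrix b b (K ∘ₗ ∑ i ∈ Finset.range (d + 1), t ^ i • T i) := by
    simp only [M, ← map_smul, ← map_sum]
    congr 1
    ext v
    simp
  rw [Set.mem_ofPred_eq, hM, LinearMap.det_toMatrix]
  by_contra hdet
  have hinj := (LinearMap.equivOfDetNeZero _ hdet).injective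
  exact ht (Function.Injective.of_comp hinj)

end Openness

section CentralizerTrivialOn

variable {k E F : Type*} [Field k] [Ring E] [Algebra k E] [Ring F] [Algebra k F]

/-- No nonzero element of the subspace `W` of the algebra `E` commutes with both `x` and `y`. It is
used with `W` the orthogonal Lie algebra, inside matrices or inside endomorphisms. -/
def CentralizerTrivialOn (W : Submodule k E) (x y : E) : Prop :=
  ∀ A ∈ W, Commute A x → Commute A y → A = 0

lemma CentralizerTrivialOn.symm {W : Submodule k E} {x y : E} (h : CentralizerTrivialOn W x y) :
    CentralizerTrivialOn W y x := fun A hA hy hx => h A hA hx hy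

lemma CentralizerTrivialOn.algEquiv {W : Submodule k E} {x y : E} (h : CentralizerTrivialOn W x y)
    (φ : E ≃ₐ[k] F) {W' : Submodule k F} (hW : ∀ A ∈ W', φ.symm A ∈ W) :
    CentralizerTrivialOn W' (φ x) (φ y) := by
  intro A hA hx hy
  have hAφ : A = φ (φ.symm A) := (φ.apply_symm_apply A).symm
  rw [hAφ] at hx hy ⊢
  rw [h _ (hW A hA) (hx.of_map φ.injective) (hy.of_map φ.injective), map_zero]

theorem finite_setOf_not_centralizerTrivialOn [FiniteDimensional k E] {W : Submodule k E} (d : ℕ)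
    (x y : ℕ → E) (h : CentralizerTrivialOn W (x 0) (y 0)) :
    {t : k | ¬ CentralizerTrivialOn W (∑ i ∈ Finset.range (d + 1), t ^ i • x i)
      (∑ i ∈ Finset.range (d + 1), t ^ i • y i)}.Finite := by
  let comm (z : E) : W →ₗ[k] E := (LinearMap.mulRight k z - LinearMap.mulLeft k z) ∘ₗ W.subtype
  let T (i : ℕ) : W →ₗ[k] E × E := (comm (x i)).prod (comm (y i))
  have hcomm (z : E) (A : W) : comm z A = 0 ↔ Commute (A : E) z := by
    simp [comm, sub_eq_zero, commute_iff_eq]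
  have hsum (t : k) (z : ℕ → E) (A : W) :
      comm (∑ i ∈ Finset.range (d + 1), t ^ i • z i) A =
        ∑ i ∈ Finset.range (d + 1), t ^ i • comm (z i) A := by
    simp [comm, Finset.mul_sum, Finset.sum_mul, smul_sub]
  refine (finite_setOf_not_injective_sum_pow_smul d T ?_).subset fun t ht hinj => ht ?_
  · refine (injective_iff_map_eq_zero _).2 fun A hA => Subtype.ext ?_
    obtain ⟨hx, hy⟩ := Prod.mk_eq_zero.1 hA
    exact h A A.2 ((hcomm _ A).1 hx) ((hcomm _ A).1 hy)
  · intro A hA hx hy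
    have hT : (∑ i ∈ Finset.range (d + 1), t ^ i • T i) ⟨A, hA⟩ = 0 := by
      have hx' := (hcomm _ ⟨A, hA⟩).2 hx
      have hy' := (hcomm _ ⟨A, hA⟩).2 hy
      rw [hsum] at hx' hy'
      simp [T, Prod.ext_iff, Prod.fst_sum, Prod.snd_sum, hx', hy']
    exact congrArg Subtype.val ((injective_iff_map_eq_zero _).1 hinj _ hT)

lemma CentralizerTrivialOn.exists_ne_zero_add_smul [FiniteDimensional k E] [Infinite k]
    {W : Submodule k E} {x y : E} (h : CentralizerTrivialOn W x y) (z w : E) :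
    ∃ t : k, t ≠ 0 ∧ CentralizerTrivialOn W (x + t • z) (y + t • w) := by
  have hfin := finite_setOf_not_centralizerTrivialOn (W := W) 1 (fun i => if i = 0 then x else z)
    (fun i => if i = 0 then y else w) (by simpa using h)
  obtain ⟨t, ht⟩ := (hfin.union (Set.finite_singleton 0)).infinite_compl.nonempty
  exact ⟨t, by simpa [Finset.sum_range_succ, and_comm] using ht⟩

end CentralizerTrivialOn

section DirDeriv

variable {k σ : Type*} [Field k]

lemma eval_aeval_polynomial (Z : σ → Polynomial k) (P : MvPolynomial σ k) (t : k) :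
    (MvPolynomial.aeval Z P).eval t = MvPolynomial.eval (fun q => (Z q).eval t) P := by
  rw [← Polynomial.coe_aeval_eq_eval, MvPolynomial.comp_aeval_apply, MvPolynomial.aeval_eq_eval]

variable [Fintype σ]

/-- The derivative of the polynomial `P` in the constant direction `v`. -/
def dirDeriv (v : σ → k) (P : MvPolynomial σ k) : MvPolynomial σ k :=
  ∑ q, MvPolynomial.C (v q) * MvPolynomial.pderiv q P

lemma derivative_aeval_mvPolynomial (Z : σ → Polynomial k) (P : MvPolynomial σ k) :
    Polynomial.derivative (MvPolynomial.aeval Z P) =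
      ∑ q, Polynomial.derivative (Z q) * MvPolynomial.aeval Z (MvPolynomial.pderiv q P) := by
  classical
  induction P using MvPolynomial.induction_on with
  | C a => simp [MvPolynomial.algHom_C]
  | add P Q hP hQ => simp [hP, hQ, mul_add, Finset.sum_add_distrib]
  | mul_X P i hP =>
    simp only [map_mul, MvPolynomial.aeval_X, Polynomial.derivative_mul, hP, Derivation.leibniz,
      MvPolynomial.pderiv_X, smul_eq_mul, map_add, mul_add, Finset.sum_add_distrib, Finset.sum_mul]
    rw [add_comm]
    congr 1
    · simp [Pi.single_apply, apply_ite, mul_comm]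
    · exact Finset.sum_congr rfl fun q _ => by ring

lemma eval_dirDeriv_eq_zero_of_infinite (d : ℕ) (c : ℕ → σ → k) (P : MvPolynomial σ k)
    (h : {t : k | MvPolynomial.eval (∑ i ∈ Finset.range (d + 2), t ^ i • c i) P = 0}.Infinite) :
    MvPolynomial.eval (c 0) (dirDeriv (c 1) P) = 0 := by
  let Z (q : σ) : Polynomial k :=
    ∑ i ∈ Finset.range (d + 2), Polynomial.C (c i q) * Polynomial.X ^ i
  have hZ (t : k) : (fun q => (Z q).eval t) = ∑ i ∈ Finset.range (d + 2), t ^ i • c i := by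
    ext q
    simp [Z, Polynomial.eval_finsetSum, mul_comm (t ^ _)]
  have hP : MvPolynomial.aeval Z P = 0 := by
    refine Polynomial.eq_zero_of_infinite_isRoot _ (h.mono fun t ht => ?_)
    rwa [Set.mem_ofPred_eq, Polynomial.IsRoot.def, eval_aeval_polynomial, hZ]
  have hZ0 (q : σ) : (Z q).eval 0 = c 0 q := by
    simp [Z, Polynomial.eval_finsetSum, Finset.sum_range_succ']
  have hZ1 (q : σ) : (Polynomial.derivative (Z q)).eval 0 = c 1 q := by
    simp [Z, Polynomial.eval_finsetSum, Finset.sum_range_succ']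
  have hder := congrArg (Polynomial.eval 0) (derivative_aeval_mvPolynomial Z P)
  rw [hP] at hder
  simpa [dirDeriv, Polynomial.eval_finsetSum, eval_aeval_polynomial, hZ0, hZ1] using hder.symm

lemma eval_add_eq_zero_of_iterate_dirDeriv [CharZero k] {x v : σ → k} {P : MvPolynomial σ k}
    (h : ∀ n, MvPolynomial.eval x ((dirDeriv v)^[n] P) = 0) : MvPolynomial.eval (x + v) P = 0 := by
  let Z (q : σ) : Polynomial k := Polynomial.C (x q) + Polynomial.C (v q) * Polynomial.X
  have hder (n : ℕ) : Polynomial.derivative^[n] (MvPolynomial.aeval Z P) =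
      MvPolynomial.aeval Z ((dirDeriv v)^[n] P) := by
    refine Function.Semiconj.iterate_right (f := MvPolynomial.aeval Z) (fun Q => ?_) n P |>.symm
    rw [derivative_aeval_mvPolynomial]
    simp [Z, dirDeriv, MvPolynomial.algHom_C]
  have hZ : MvPolynomial.aeval Z P = 0 := by
    ext n
    have hn := Polynomial.coeff_iterate_derivative (k := n) (MvPolynomial.aeval Z P) 0
    rw [hder, Polynomial.coeff_zero_eq_eval_zero, eval_aeval_polynomial] at hn
    simpa [Z, h n, Nat.descFactorial_self, Nat.factorial_ne_zero] using hn.symm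
  have hxv := eval_aeval_polynomial Z P 1
  rw [hZ, Polynomial.eval_zero] at hxv
  simpa [Z, Pi.add_def] using hxv.symm

lemma eval_add_eq_zero_of_stable_dirDeriv [CharZero k] {U : Set (σ → k)} {v : σ → k}
    (hU : ∀ P : MvPolynomial σ k, (∀ x ∈ U, MvPolynomial.eval x P = 0) →
      ∀ x ∈ U, MvPolynomial.eval x (dirDeriv v P) = 0)
    {P : MvPolynomial σ k} (hP : ∀ x ∈ U, MvPolynomial.eval x P = 0) {x : σ → k} (hx : x ∈ U) :
    MvPolynomial.eval (x + v) P = 0 := by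
  refine eval_add_eq_zero_of_iterate_dirDeriv fun n => ?_
  suffices h : ∀ x ∈ U, MvPolynomial.eval x ((dirDeriv v)^[n] P) = 0 from h x hx
  induction n with
  | zero => exact hP
  | succ n ih => simpa only [Function.iterate_succ_apply'] using hU _ ih

end DirDeriv

section SkewMatrix

variable {k n : Type*} [Field k] [Fintype n]

lemma eq_zero_of_isotropic_pairing [CharZero k] (hi : IsSquare (-1 : k))
    (hn : 3 ≤ Fintype.card n) {S : Matrix n n k} (hS : Sᵀ = -S)
    (h : ∀ u v : n → k, u ⬝ᵥ u = 0 → u ⬝ᵥ v = 0 → v ⬝ᵥ (S *ᵥ u) = 0) : S = 0 := by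
  classical
  obtain ⟨ι, hι⟩ := hi
  ext j i
  obtain rfl | hij := eq_or_ne i j
  · simpa [self_eq_neg] using congrFun (congrFun hS i) i
  obtain ⟨l, hli, hlj⟩ : ∃ l, l ≠ i ∧ l ≠ j := by
    have hcard : ({i, j} : Finset n).card < Finset.univ.card := Finset.card_le_two.trans_lt hn
    obtain ⟨l, -, hl⟩ := Finset.exists_mem_notMem_of_card_lt_card hcard
    exact ⟨l, by simpa using hl⟩
  have key (ε : k) (hε : -1 = ε * ε) : S j i + ε * S j l = 0 := by
    have := h (Pi.single i 1 + ε • Pi.single l 1) (Pi.single j 1)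
      (by simp [dotProduct_add, hli, hli.symm, ← hε]) (by simp [hij, hlj])
    simpa [Matrix.mulVec_add, Matrix.mulVec_smul] using this
  have h2 : 2 * S j i = 0 := by
    linear_combination key ι hι + key (-ι) (by rw [neg_mul_neg, hι])
  simpa using h2

lemma two_mul_trace_transpose_mul {v : Matrix n n k} (hv : vᵀ = -v) (L : Matrix n n k) :
    2 * (Lᵀ * v).trace = -((L - Lᵀ) * v).trace := by
  have hL : (Lᵀ * v).trace = -(L * v).trace := by
    rw [← Matrix.trace_transpose, Matrix.transpose_mul, Matrix.transpose_transpose, hv,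
      Matrix.neg_mul, Matrix.trace_neg, Matrix.trace_mul_comm]
  rw [sub_mul, Matrix.trace_sub]
  linear_combination hL

lemma transpose_commutator {x y : Matrix n n k} (hx : xᵀ = -x) (hy : yᵀ = -y) :
    (x * y - y * x)ᵀ = -(x * y - y * x) := by
  simp [hx, hy]

lemma trace_wedge_mul {S : Matrix n n k} (hS : Sᵀ = -S) (u v : n → k) :
    ((Matrix.vecMulVec u v - Matrix.vecMulVec v u) * S).trace = 2 * (v ⬝ᵥ (S *ᵥ u)) := by
  have huv : u ⬝ᵥ (S *ᵥ v) = -(v ⬝ᵥ (S *ᵥ u)) := by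
    rw [Matrix.dotProduct_mulVec, dotProduct_comm, ← Matrix.mulVec_transpose, hS,
      Matrix.neg_mulVec, dotProduct_neg]
  rw [sub_mul, Matrix.trace_sub, Matrix.vecMulVec_mul, Matrix.vecMulVec_mul,
    Matrix.trace_vecMulVec, Matrix.trace_vecMulVec, dotProduct_comm, dotProduct_comm v,
    ← Matrix.dotProduct_mulVec, ← Matrix.dotProduct_mulVec, huv]
  ring

lemma trace_mul_commutator (a z M : Matrix n n k) :
    (a * (z * M - M * z)).trace = (M * (a * z - z * a)).trace := by
  simp only [mul_sub, ← mul_assoc, Matrix.trace_sub]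
  rw [Matrix.trace_mul_cycle a z M, ← Matrix.trace_mul_cycle M z a]

lemma commute_sub_transpose_of_trace_commutator_eq_zero [CharZero k] (hi : IsSquare (-1 : k))
    (hn : 3 ≤ Fintype.card n) {L z : Matrix n n k} (hz : zᵀ = -z)
    (h : ∀ a : Matrix n n k, aᵀ = -a → a * a * a = 0 → (Lᵀ * (a * z - z * a)).trace = 0) :
    Commute (L - Lᵀ) z := by
  have hS : (z * (L - Lᵀ) - (L - Lᵀ) * z)ᵀ = -(z * (L - Lᵀ) - (L - Lᵀ) * z) :=
    transpose_commutator hz (by simp)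
  refine (sub_eq_zero.1 (eq_zero_of_isotropic_pairing hi hn hS fun u v huu huv => ?_)).symm
  let a := Matrix.vecMulVec u v - Matrix.vecMulVec v u
  have ha : aᵀ = -a := by simp [a, Matrix.transpose_vecMulVec]
  have ha3 : a * a * a = 0 := by
    simp [a, sub_mul, mul_sub, Matrix.vecMulVec_mul_vecMulVec, huu, huv, dotProduct_comm v u]
  have htrace := two_mul_trace_transpose_mul (transpose_commutator ha hz) L
  rw [h a ha ha3, ← trace_mul_commutator, trace_wedge_mul hS] at htrace
  simpa using htrace

end SkewMatrix

section Terracini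

variable {k n : Type*} [Field k] [Fintype n]

/-- The gradient at the matrix `M` of a polynomial in the matrix entries, as a matrix. -/
def gradientMatrix (P : MvPolynomial (n × n) k) (M : Matrix n n k) : Matrix n n k :=
  Matrix.of fun i j => MvPolynomial.eval (fun q => M q.1 q.2) (MvPolynomial.pderiv (i, j) P)

lemma eval_dirDeriv_eq_trace (P : MvPolynomial (n × n) k) (M v : Matrix n n k) :
    MvPolynomial.eval (fun q => M q.1 q.2) (dirDeriv (fun q => v q.1 q.2) P) =
      ((gradientMatrix P M)ᵀ * v).trace := by
  simp [dirDeriv, gradientMatrix, Matrix.trace, Matrix.mul_apply, Fintype.sum_prod_type_right,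
    mul_comm]

variable [DecidableEq n]

lemma mem_skewAdjointMatricesSubmodule_one {A : Matrix n n k} :
    A ∈ skewAdjointMatricesSubmodule (1 : Matrix n n k) ↔ Aᵀ = -A := by
  simp [Matrix.IsSkewAdjoint, Matrix.IsAdjointPair]

lemma one_add_smul_add_mul_transpose [NeZero (2 : k)] {a : Matrix n n k} (ha : aᵀ = -a)
    (ha3 : a * a * a = 0) (t : k) :
    (1 + t • a + (t ^ 2 * 2⁻¹) • (a * a)) * (1 + t • a + (t ^ 2 * 2⁻¹) • (a * a))ᵀ = 1 := by
  have ha3' : a * (a * a) = 0 := by rw [← mul_assoc, ha3]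
  have ht : (1 + t • a + (t ^ 2 * 2⁻¹) • (a * a))ᵀ = 1 - t • a + (t ^ 2 * 2⁻¹) • (a * a) := by
    simp [ha, sub_eq_add_neg]
  rw [ht]
  simp only [add_mul, mul_add, mul_sub, one_mul, mul_one, smul_mul_assoc, mul_smul_comm,
    mul_assoc, ha3', mul_zero, smul_zero]
  match_scalars <;> field_simp <;> ring

lemma exists_curve_eq_conj (a x : Matrix n n k) : ∃ c : ℕ → Matrix n n k,
    c 0 = x ∧ c 1 = a * x - x * a ∧ ∀ t : k, ∑ i ∈ Finset.range 5, t ^ i • c i =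
      (1 + t • a + (t ^ 2 * 2⁻¹) • (a * a)) * x * (1 - t • a + (t ^ 2 * 2⁻¹) • (a * a)) := by
  let b := (2⁻¹ : k) • (a * a)
  let c : ℕ → Matrix n n k
    | 0 => x
    | 1 => a * x - x * a
    | 2 => b * x + x * b - a * x * a
    | 3 => a * x * b - b * x * a
    | _ => b * x * b
  refine ⟨c, rfl, rfl, fun t => ?_⟩
  simp only [Finset.sum_range_succ, Finset.sum_range_zero, c, mul_smul, b]
  simp only [add_mul, mul_add, mul_sub, one_mul, mul_one, smul_mul_assoc, mul_smul_comm,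
    smul_add, smul_sub, smul_smul, pow_zero, one_smul, mul_assoc]
  module

variable [CharZero k] {O : Set (Matrix n n k)}

lemma trace_gradientMatrix_mul_commutator_eq_zero
    (hO : ∀ g x : Matrix n n k, g * gᵀ = 1 → x ∈ O → g * x * gᵀ ∈ O)
    {P : MvPolynomial (n × n) k}
    (hP : ∀ x ∈ O, ∀ y ∈ O,
      CentralizerTrivialOn (skewAdjointMatricesSubmodule (1 : Matrix n n k)) x y →
      MvPolynomial.eval (fun q => (x + y) q.1 q.2) P = 0)
    {x y : Matrix n n k} (hx : x ∈ O) (hy : y ∈ O)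
    (hxy : CentralizerTrivialOn (skewAdjointMatricesSubmodule (1 : Matrix n n k)) x y)
    {a : Matrix n n k} (ha : aᵀ = -a) (ha3 : a * a * a = 0) :
    ((gradientMatrix P (x + y))ᵀ * (a * x - x * a)).trace = 0 := by
  obtain ⟨c, hc0, hc1, hc⟩ := exists_curve_eq_conj a x
  let y' : ℕ → Matrix n n k := Pi.single 0 y
  have hy' (t : k) : ∑ i ∈ Finset.range 5, t ^ i • y' i = y := by
    simp [Finset.sum_range_succ', y']
  have hcO (t : k) : ∑ i ∈ Finset.range 5, t ^ i • c i ∈ O := by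
    have hg : (1 + t • a + (t ^ 2 * 2⁻¹) • (a * a))ᵀ = 1 - t • a + (t ^ 2 * 2⁻¹) • (a * a) := by
      simp [ha, sub_eq_add_neg]
    rw [hc, ← hg]
    exact hO _ _ (one_add_smul_add_mul_transpose ha ha3 t) hx
  have hfin := finite_setOf_not_centralizerTrivialOn 4 c y' (by rwa [hc0])
  have hzero := eval_dirDeriv_eq_zero_of_infinite 3 (fun i q => (c i + y' i) q.1 q.2) P <|
    hfin.infinite_compl.mono fun t ht => by
      rw [Set.mem_compl_iff, Set.mem_ofPred_eq, not_not, hy'] at ht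
      have heval := hP _ (hcO t) _ hy ht
      rw [← hy' t, ← Finset.sum_add_distrib] at heval
      rw [Set.mem_ofPred_eq, ← heval]
      congr 2
      ext q
      simp [Matrix.sum_apply, mul_add]
  have hc0' : (fun q : n × n => (c 0 + y' 0) q.1 q.2) = fun q => (x + y) q.1 q.2 := by
    simp [hc0, y']
  have hc1' : c 1 + y' 1 = a * x - x * a := by simp [hc1, y']
  rwa [hc0', hc1', eval_dirDeriv_eq_trace] at hzero

lemma eval_dirDeriv_skew_eq_zero (hi : IsSquare (-1 : k)) (hn : 3 ≤ Fintype.card n)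
    (hso : ∀ x ∈ O, xᵀ = -x) (hO : ∀ g x : Matrix n n k, g * gᵀ = 1 → x ∈ O → g * x * gᵀ ∈ O)
    {P : MvPolynomial (n × n) k}
    (hP : ∀ x ∈ O, ∀ y ∈ O,
      CentralizerTrivialOn (skewAdjointMatricesSubmodule (1 : Matrix n n k)) x y →
      MvPolynomial.eval (fun q => (x + y) q.1 q.2) P = 0)
    {x y : Matrix n n k} (hx : x ∈ O) (hy : y ∈ O)
    (hxy : CentralizerTrivialOn (skewAdjointMatricesSubmodule (1 : Matrix n n k)) x y)
    {v : Matrix n n k} (hv : vᵀ = -v) :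
    MvPolynomial.eval (fun q => (x + y) q.1 q.2) (dirDeriv (fun q => v q.1 q.2) P) = 0 := by
  let L := gradientMatrix P (x + y)
  have hLx : Commute (L - Lᵀ) x :=
    commute_sub_transpose_of_trace_commutator_eq_zero hi hn (hso x hx) fun a ha ha3 =>
      trace_gradientMatrix_mul_commutator_eq_zero hO hP hx hy hxy ha ha3
  have hLy : Commute (L - Lᵀ) y :=
    commute_sub_transpose_of_trace_commutator_eq_zero hi hn (hso y hy) fun a ha ha3 => by
      simpa only [L, add_comm x y] using
        trace_gradientMatrix_mul_commutator_eq_zero hO hP hy hx hxy.symm ha ha3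
  have hL : L - Lᵀ = 0 :=
    hxy _ (mem_skewAdjointMatricesSubmodule_one.2 (by simp)) hLx hLy
  have htrace := two_mul_trace_transpose_mul hv L
  rw [hL] at htrace
  rw [eval_dirDeriv_eq_trace]
  simpa using htrace

end Terracini

lemma zClosure_subset_soSet {k : Type*} [CommRing k] {N : ℕ} {S : Set (Matrix (Fin N) (Fin N) k)}
    (hS : S ⊆ soSet k N) : zClosure S ⊆ soSet k N := by
  intro M hM
  ext i j
  have hM' := hM (MvPolynomial.X (j, i) + MvPolynomial.X (i, j)) fun x hx => by
    simpa [eq_neg_iff_add_eq_zero] using congrFun (congrFun (hS hx) i) j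
  exact eq_neg_of_add_eq_zero_left (by simpa using hM')

/-- A form of Terracini's lemma: the tangent spaces at `x` and `y` of an orthogonally invariant
set span the orthogonal Lie algebra once the centralizer of `x` and `y` there is trivial. -/
theorem zClosure_add_eq_soSet {k : Type*} [Field k] [CharZero k] (hi : IsSquare (-1 : k)) {N : ℕ}
    (hN : 3 ≤ N) {O : Set (Matrix (Fin N) (Fin N) k)} (hso : O ⊆ soSet k N)
    (hO : ∀ g x : Matrix (Fin N) (Fin N) k, g * gᵀ = 1 → x ∈ O → g * x * gᵀ ∈ O)
    {x y : Matrix (Fin N) (Fin N) k} (hx : x ∈ O) (hy : y ∈ O)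
    (hxy : CentralizerTrivialOn (skewAdjointMatricesSubmodule (1 : Matrix (Fin N) (Fin N) k)) x y) :
    zClosure (Set.image2 (· + ·) O O) = soSet k N := by
  have hadd {z w : Matrix (Fin N) (Fin N) k} (hz : z ∈ soSet k N) (hw : w ∈ soSet k N) :
      z + w ∈ soSet k N := by
    rw [soSet, Set.mem_ofPred_eq] at *
    rw [Matrix.transpose_add, hz, hw, neg_add]
  refine (zClosure_subset_soSet ?_).antisymm fun M hM P hP => ?_
  · rintro _ ⟨z, hz, w, hw, rfl⟩
    exact hadd (hso hz) (hso hw)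
  let U : Set (Fin N × Fin N → k) := {f | ∃ z ∈ O, ∃ w ∈ O,
    CentralizerTrivialOn (skewAdjointMatricesSubmodule (1 : Matrix (Fin N) (Fin N) k)) z w ∧
      f = fun q => (z + w) q.1 q.2}
  have hv : (M - (x + y))ᵀ = -(M - (x + y)) := by
    rw [Matrix.transpose_sub, hM, hadd (hso hx) (hso hy), neg_sub_neg, neg_sub]
  have hstable := eval_add_eq_zero_of_stable_dirDeriv (U := U)
    (v := fun q => (M - (x + y)) q.1 q.2) (P := P) ?_ ?_ ⟨x, hx, y, hy, hxy, rfl⟩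
  · simpa [Pi.add_def] using hstable
  · rintro Q hQ _ ⟨z, hz, w, hw, hzw, rfl⟩
    exact eval_dirDeriv_skew_eq_zero hi (by simpa using hN) (fun z hz => hso hz) hO
      (fun z hz w hw hzw => hQ _ ⟨z, hz, w, hw, hzw, rfl⟩) hz hw hzw hv
  · rintro _ ⟨z, hz, w, hw, -, rfl⟩
    exact hP _ ⟨z, hz, w, hw, rfl⟩

section Forms

open LinearMap (BilinForm)

variable {k V V' : Type*} [Field k] [AddCommGroup V] [Module k V] [AddCommGroup V'] [Module k V']

lemma mem_skewAdjointSubmodule_iff_apply {B : BilinForm k V} {A : Module.End k V} :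
    A ∈ B.skewAdjointSubmodule ↔ ∀ v w, B (A v) w = -B v (A w) := by
  simp [LinearMap.mem_skewAdjointSubmodule, LinearMap.IsSkewAdjoint, LinearMap.IsAdjointPair]

lemma apply_pow_apply_of_mem_skewAdjointSubmodule {B : BilinForm k V} {x : Module.End k V}
    (hx : x ∈ B.skewAdjointSubmodule) (n : ℕ) (v w : V) :
    B ((x ^ n) v) w = (-1) ^ n * B v ((x ^ n) w) := by
  induction n generalizing v w with
  | zero => simp
  | succ n ih =>
    rw [pow_succ', Module.End.mul_apply, mem_skewAdjointSubmodule_iff_apply.1 hx, ih,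
      ← Module.End.mul_apply, ← pow_succ, pow_succ' x n]
    ring

/-- The bilinear form `B` has an orthonormal basis. Over an algebraically closed field these are
the nondegenerate symmetric forms; the basis identifies skew-adjoint endomorphisms with
skew-symmetric matrices. -/
def HasOrthonormalBasis (B : BilinForm k V) : Prop :=
  ∃ b : Module.Basis (Fin (Module.finrank k V)) k V,
    ∀ i j, B (b i) (b j) = if i = j then 1 else 0

namespace HasOrthonormalBasis

variable {B : BilinForm k V} {B' : BilinForm k V'}

lemma of_basis {ι : Type*} [Finite ι] [DecidableEq ι] (b : Module.Basis ι k V)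
    (hb : ∀ i j, B (b i) (b j) = if i = j then 1 else 0) : HasOrthonormalBasis B := by
  have := Fintype.ofFinite ι
  let e : ι ≃ Fin (Module.finrank k V) :=
    Fintype.equivOfCardEq (by rw [Fintype.card_fin, Module.finrank_eq_card_basis b])
  exact ⟨b.reindex e, fun i j => by simp [hb]⟩

lemma isSymm (hB : HasOrthonormalBasis B) : B.IsSymm := by
  obtain ⟨b, hb⟩ := hB
  exact (LinearMap.BilinForm.isSymm_iff_basis b).2 fun i j => by simp [hb, eq_comm]

lemma eq_zero_of_forall_apply_eq_zero (hB : HasOrthonormalBasis B) {v : V}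
    (hv : ∀ w, B v w = 0) : v = 0 := by
  obtain ⟨b, hb⟩ := hB
  refine (b.forall_coord_eq_zero_iff).1 fun i => ?_
  calc b.coord i v = B (∑ j, b.repr v j • b j) (b i) := by
        simp [-Module.Basis.sum_repr, hb]
    _ = 0 := by rw [b.sum_repr, hv]

lemma smul_one_eq_zero_of_mem_skewAdjointSubmodule [CharZero k] (hB : HasOrthonormalBasis B)
    {α : k} (hα : α • (1 : Module.End k V) ∈ B.skewAdjointSubmodule) :
    α • (1 : Module.End k V) = 0 := by
  ext v
  refine hB.eq_zero_of_forall_apply_eq_zero fun w => ?_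
  simpa [self_eq_neg] using mem_skewAdjointSubmodule_iff_apply.1 hα v w

end HasOrthonormalBasis

/-- The orthogonal direct sum of two bilinear forms. -/
def prodForm (B : BilinForm k V) (B' : BilinForm k V') : BilinForm k (V × V') :=
  B.compl₁₂ (LinearMap.fst k V V') (LinearMap.fst k V V') +
    B'.compl₁₂ (LinearMap.snd k V V') (LinearMap.snd k V V')

@[simp]
lemma prodForm_apply (B : BilinForm k V) (B' : BilinForm k V') (v w : V × V') :
    prodForm B B' v w = B v.1 w.1 + B' v.2 w.2 := rfl

lemma HasOrthonormalBasis.prodForm {B : BilinForm k V} {B' : BilinForm k V'}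
    (hB : HasOrthonormalBasis B) (hB' : HasOrthonormalBasis B') :
    HasOrthonormalBasis (prodForm B B') := by
  obtain ⟨b, hb⟩ := hB
  obtain ⟨b', hb'⟩ := hB'
  refine .of_basis (b.prod b') ?_
  rintro (i | i) (j | j) <;> simp [hb, hb']

lemma prodMap_mem_skewAdjointSubmodule {B : BilinForm k V} {B' : BilinForm k V'}
    {x : Module.End k V} {x' : Module.End k V'} (hx : x ∈ B.skewAdjointSubmodule)
    (hx' : x' ∈ B'.skewAdjointSubmodule) :
    x.prodMap x' ∈ (prodForm B B').skewAdjointSubmodule := by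
  rw [mem_skewAdjointSubmodule_iff_apply] at *
  intro v w
  simp [hx, hx', add_comm]

end Forms

section Rigidity

open LinearMap (BilinForm)

variable {k V V' : Type*} [Field k] [AddCommGroup V] [Module k V] [AddCommGroup V'] [Module k V']

/-- The word `(yx)^a y^b (xy)^a x^b` in two endomorphisms. -/
def wordEnd (a b : ℕ) (x y : Module.End k V) : Module.End k V :=
  (y * x) ^ a * y ^ b * (x * y) ^ a * x ^ b

lemma wordEnd_smul (a b : ℕ) (x y : Module.End k V) (c : k) :
    wordEnd a b x (c • y) = c ^ (2 * a + b) • wordEnd a b x y := by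
  simp only [wordEnd, smul_mul_assoc, mul_smul_comm, smul_pow, smul_smul]
  congr 1
  ring

lemma comp_wordEnd (a b : ℕ) {x y : Module.End k V} {x' y' : Module.End k V'} {T : V →ₗ[k] V'}
    (hx : x' ∘ₗ T = T ∘ₗ x) (hy : y' ∘ₗ T = T ∘ₗ y) :
    wordEnd a b x' y' ∘ₗ T = T ∘ₗ wordEnd a b x y := by
  have hmul {z w : Module.End k V} {z' w' : Module.End k V'} (hz : z' ∘ₗ T = T ∘ₗ z)
      (hw : w' ∘ₗ T = T ∘ₗ w) : (z' * w') ∘ₗ T = T ∘ₗ (z * w) := by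
    rw [Module.End.mul_eq_comp, Module.End.mul_eq_comp, LinearMap.comp_assoc, hw,
      ← LinearMap.comp_assoc, hz, LinearMap.comp_assoc]
  have hpow {z : Module.End k V} {z' : Module.End k V'} (hz : z' ∘ₗ T = T ∘ₗ z) (n : ℕ) :
      (z' ^ n) ∘ₗ T = T ∘ₗ (z ^ n) := Module.End.commute_pow_left_of_commute hz n
  exact hmul (hmul (hmul (hpow (hmul hy hx) a) (hpow hy b)) (hpow (hmul hx hy) a)) (hpow hx b)

/-- A word in `x` and `y` has rank one, with eigenvector `s` for the eigenvalue `μ ≠ 0`, and `s`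
generates the space under `x` and `y`. By Schur's lemma applied to the word, only scalars commute
with such a pair. -/
structure IsCyclicallyRigid (x y : Module.End k V) (s : V) (a b : ℕ) (μ : k) : Prop where
  pos : 0 < b
  ne_zero : μ ≠ 0
  word_self : wordEnd a b x y s = μ • s
  word_mem : ∀ v, wordEnd a b x y v ∈ Submodule.span k {s}
  generates : ∀ U ∈ x.invtSubmodule, U ∈ y.invtSubmodule → s ∈ U → U = ⊤

namespace IsCyclicallyRigid

variable {x y : Module.End k V} {s : V} {a b : ℕ} {μ : k}

lemma smul_right (h : IsCyclicallyRigid x y s a b μ) {c : k} (hc : c ≠ 0) :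
    IsCyclicallyRigid x (c • y) s a b (c ^ (2 * a + b) * μ) where
  pos := h.pos
  ne_zero := mul_ne_zero (pow_ne_zero _ hc) h.ne_zero
  word_self := by rw [wordEnd_smul, LinearMap.smul_apply, h.word_self, smul_smul]
  word_mem v := by
    rw [wordEnd_smul]
    exact Submodule.smul_mem _ _ (h.word_mem v)
  generates U hx hy := h.generates U hx fun v hv => by
    simpa [hc] using U.smul_mem c⁻¹ (hy hv)

lemma eq_zero_of_apply_eq_zero (h : IsCyclicallyRigid x y s a b μ) {x' y' : Module.End k V'}
    {T : V →ₗ[k] V'} (hx : x' ∘ₗ T = T ∘ₗ x) (hy : y' ∘ₗ T = T ∘ₗ y) (hs : T s = 0) : T = 0 := by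
  have hinvt {z : Module.End k V} {z' : Module.End k V'} (hz : z' ∘ₗ T = T ∘ₗ z) :
      LinearMap.ker T ∈ z.invtSubmodule := fun v hv => by
    have hzv := LinearMap.congr_fun hz v
    simpa [LinearMap.mem_ker.1 hv, eq_comm] using hzv
  exact LinearMap.ker_eq_top.1 (h.generates _ (hinvt hx) (hinvt hy) hs)

lemma eq_zero_of_not_hasEigenvalue (h : IsCyclicallyRigid x y s a b μ) {x' y' : Module.End k V'}
    {T : V →ₗ[k] V'} (hx : x' ∘ₗ T = T ∘ₗ x) (hy : y' ∘ₗ T = T ∘ₗ y)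
    (hμ : ¬ (wordEnd a b x' y').HasEigenvalue μ) : T = 0 := by
  refine h.eq_zero_of_apply_eq_zero hx hy (by_contra fun hs => hμ ?_)
  refine Module.End.hasEigenvalue_of_hasEigenvector (x := T s) ⟨?_, hs⟩
  rw [Module.End.mem_eigenspace_iff, ← LinearMap.comp_apply, comp_wordEnd a b hx hy,
    LinearMap.comp_apply, h.word_self, map_smul]

lemma exists_eq_smul_one (h : IsCyclicallyRigid x y s a b μ) {A : Module.End k V}
    (hx : Commute A x) (hy : Commute A y) : ∃ α : k, A = α • 1 := by
  have hword : wordEnd a b x y (A s) = μ • A s := by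
    rw [← LinearMap.comp_apply, comp_wordEnd a b hx.eq.symm hy.eq.symm, LinearMap.comp_apply,
      h.word_self, map_smul]
  obtain ⟨α, hα⟩ := Submodule.mem_span_singleton.1 (h.word_mem (A s))
  have hAs : A s = (μ⁻¹ * α) • s := by
    rw [mul_smul, hα, hword, inv_smul_smul₀ h.ne_zero]
  have hcomm {z : Module.End k V} (hz : Commute A z) : Commute z (A - (μ⁻¹ * α) • 1) :=
    hz.symm.sub_right ((Commute.one_right z).smul_right _)
  exact ⟨_, sub_eq_zero.1 (h.eq_zero_of_apply_eq_zero (hcomm hx).eq (hcomm hy).eq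
    (by simp [hAs]))⟩

end IsCyclicallyRigid

lemma exists_ne_zero_not_hasEigenvalue_pow_mul [Infinite k] [FiniteDimensional k V]
    (W : Module.End k V) {d : ℕ} (hd : 0 < d) {μ : k} (hμ : μ ≠ 0) :
    ∃ c : k, c ≠ 0 ∧ ¬ W.HasEigenvalue (c ^ d * μ) := by
  have hfin : {c : k | W.HasEigenvalue (c ^ d * μ)}.Finite := by
    refine (Module.End.finite_hasEigenvalue W).preimage' fun e _ => ?_
    classical
    refine (Polynomial.nthRoots d (e / μ)).toFinset.finite_toSet.subset fun c hc => ?_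
    simpa [Polynomial.mem_nthRoots hd, eq_div_iff hμ] using hc
  obtain ⟨c, hc⟩ := (hfin.union (Set.finite_singleton 0)).infinite_compl.nonempty
  simp only [Set.mem_compl_iff, Set.mem_union, Set.mem_ofPred_eq, Set.mem_singleton_iff,
    not_or] at hc
  exact ⟨c, hc.2, hc.1⟩

lemma IsCyclicallyRigid.centralizerTrivialOn_prodMap [CharZero k] {B : BilinForm k V}
    {B' : BilinForm k V'} (hB' : HasOrthonormalBasis B')
    {x y : Module.End k V} {x' y' : Module.End k V'} {s : V'} {a b : ℕ} {μ : k}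
    (hxy : CentralizerTrivialOn B.skewAdjointSubmodule x y)
    (h : IsCyclicallyRigid x' y' s a b μ) (hμ : ¬ (wordEnd a b x y).HasEigenvalue μ) :
    CentralizerTrivialOn (prodForm B B').skewAdjointSubmodule (x.prodMap x') (y.prodMap y') := by
  intro A hA hAx hAy
  rw [mem_skewAdjointSubmodule_iff_apply] at hA
  have comm_fst {z : Module.End k V} {z' : Module.End k V'} (hz : Commute A (z.prodMap z'))
      (v : V) : A (z v, 0) = (z (A (v, 0)).1, z' (A (v, 0)).2) := by
    simpa using LinearMap.congr_fun hz.eq (v, 0)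
  have comm_snd {z : Module.End k V} {z' : Module.End k V'} (hz : Commute A (z.prodMap z'))
      (v : V') : A (0, z' v) = (z (A (0, v)).1, z' (A (0, v)).2) := by
    simpa using LinearMap.congr_fun hz.eq (0, v)
  have upper_right : LinearMap.fst k V V' ∘ₗ A ∘ₗ LinearMap.inr k V V' = 0 :=
    h.eq_zero_of_not_hasEigenvalue (x' := x) (y' := y)
      (LinearMap.ext fun v => by simp [comm_snd hAx])
      (LinearMap.ext fun v => by simp [comm_snd hAy]) hμ
  have hA₁₂ (v : V') : (A (0, v)).1 = 0 := LinearMap.congr_fun upper_right v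
  have hA₂₁ (v : V) : (A (v, 0)).2 = 0 :=
    hB'.eq_zero_of_forall_apply_eq_zero fun w => by simpa [hA₁₂] using hA (v, 0) (0, w)
  have hA₁₁ : LinearMap.fst k V V' ∘ₗ A ∘ₗ LinearMap.inl k V V' = 0 :=
    hxy _ (mem_skewAdjointSubmodule_iff_apply.2 fun v w => by simpa using hA (v, 0) (w, 0))
      (LinearMap.ext fun v => by simp [comm_fst hAx])
      (LinearMap.ext fun v => by simp [comm_fst hAy])
  have hA₂₂ : LinearMap.snd k V V' ∘ₗ A ∘ₗ LinearMap.inr k V V' = 0 := by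
    obtain ⟨α, hα⟩ := h.exists_eq_smul_one (A := LinearMap.snd k V V' ∘ₗ A ∘ₗ LinearMap.inr k V V')
      (LinearMap.ext fun v => by simp [comm_snd hAx])
      (LinearMap.ext fun v => by simp [comm_snd hAy])
    rw [hα]
    refine hB'.smul_one_eq_zero_of_mem_skewAdjointSubmodule (hα ▸ ?_)
    exact mem_skewAdjointSubmodule_iff_apply.2 fun v w => by simpa using hA (0, v) (0, w)
  refine LinearMap.prod_ext (LinearMap.ext fun v => ?_) (LinearMap.ext fun v => ?_)
  · exact Prod.ext (LinearMap.congr_fun hA₁₁ v) (hA₂₁ v)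
  · exact Prod.ext (hA₁₂ v) (LinearMap.congr_fun hA₂₂ v)

lemma IsCyclicallyRigid.exists_centralizerTrivialOn_prodMap [CharZero k] [FiniteDimensional k V]
    {B : BilinForm k V} {B' : BilinForm k V'} (hB' : HasOrthonormalBasis B')
    {x y : Module.End k V} {x' y' : Module.End k V'} {s : V'} {a b : ℕ} {μ : k}
    (hxy : CentralizerTrivialOn B.skewAdjointSubmodule x y)
    (h : IsCyclicallyRigid x' y' s a b μ) :
    ∃ c : k, c ≠ 0 ∧ CentralizerTrivialOn (prodForm B B').skewAdjointSubmodule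
      (x.prodMap x') (y.prodMap (c • y')) := by
  obtain ⟨c, hc, hμ⟩ := exists_ne_zero_not_hasEigenvalue_pow_mul (wordEnd a b x y)
    (d := 2 * a + b) (by have := h.pos; omega) h.ne_zero
  exact ⟨c, hc, (h.smul_right hc).centralizerTrivialOn_prodMap hB' hxy hμ⟩

end Rigidity

section Chains

open LinearMap (BilinForm)

variable {k V ι κ : Type*} [Field k] [AddCommGroup V] [Module k V]

/-- The span of the cyclic subspaces generated by a family of vectors. -/
def chainSpan (x : Module.End k V) (v : ι → V) : Submodule k V :=
  Submodule.span k (Set.range fun p : ι × ℕ => (x ^ p.2) (v p.1))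

lemma pow_apply_mem_chainSpan (x : Module.End k V) (v : ι → V) (l : ι) (i : ℕ) :
    (x ^ i) (v l) ∈ chainSpan x v := Submodule.subset_span ⟨(l, i), rfl⟩

lemma mem_chainSpan (x : Module.End k V) (v : ι → V) (l : ι) : v l ∈ chainSpan x v :=
  pow_apply_mem_chainSpan x v l 0

lemma pow_apply_mem_of_mem_invtSubmodule {x : Module.End k V} {U : Submodule k V}
    (hU : U ∈ x.invtSubmodule) {v : V} (hv : v ∈ U) (i : ℕ) : (x ^ i) v ∈ U := by
  induction i with
  | zero => exact hv
  | succ i ih => exact pow_succ' x i ▸ hU ih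

lemma chainSpan_le {x : Module.End k V} {v : ι → V} {U : Submodule k V}
    (hU : U ∈ x.invtSubmodule) (hv : ∀ l, v l ∈ U) : chainSpan x v ≤ U := by
  refine Submodule.span_le.2 ?_
  rintro _ ⟨⟨l, i⟩, rfl⟩
  exact pow_apply_mem_of_mem_invtSubmodule hU (hv l) i

lemma chainSpan_mem_invtSubmodule (x : Module.End k V) (v : ι → V) :
    chainSpan x v ∈ x.invtSubmodule := by
  refine Submodule.span_le.2 ?_
  rintro _ ⟨⟨l, i⟩, rfl⟩
  exact Submodule.subset_span ⟨(l, i + 1), by simp [pow_succ']⟩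

lemma map_pow_chainSpan (x : Module.End k V) (v : ι → V) (n : ℕ) :
    (chainSpan x v).map (x ^ n) = chainSpan x fun l => (x ^ n) (v l) := by
  rw [chainSpan, Submodule.map_span, ← Set.range_comp, chainSpan]
  congr! 3 with p
  simp only [Function.comp_apply, ← Module.End.mul_apply, ← pow_add, add_comm]

lemma pow_apply_eq_zero_of_le {x : Module.End k V} {v : V} {a b : ℕ} (h : (x ^ a) v = 0)
    (hab : a ≤ b) : (x ^ b) v = 0 := by
  rw [← Nat.sub_add_cancel hab, pow_add, Module.End.mul_apply, h, map_zero]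

lemma chainSpan_eq_span_range {x : Module.End k V} {v : ι → V} {L : ι → ℕ}
    (hv : ∀ l, (x ^ L l) (v l) = 0) :
    chainSpan x v =
      Submodule.span k (Set.range fun p : Σ l, Fin (L l) => (x ^ (p.2 : ℕ)) (v p.1)) := by
  refine le_antisymm (Submodule.span_le.2 ?_) (Submodule.span_mono ?_)
  · rintro _ ⟨⟨l, i⟩, rfl⟩
    by_cases hi : i < L l
    · exact Submodule.subset_span ⟨⟨l, i, hi⟩, rfl⟩
    · simp [pow_apply_eq_zero_of_le (hv l) (not_lt.1 hi)]
  · rintro _ ⟨⟨l, i⟩, rfl⟩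
    exact ⟨(l, i), rfl⟩

/-- A family of vectors generating Jordan chains of prescribed lengths, whose last vectors are
linearly independent. -/
structure IsJordanChains (x : Module.End k V) (v : ι → V) (L : ι → ℕ) : Prop where
  pos : ∀ l, 1 ≤ L l
  pow_eq_zero : ∀ l, (x ^ L l) (v l) = 0
  socle : LinearIndependent k fun l => (x ^ (L l - 1)) (v l)

lemma exists_pow_sum_smul_pow_eq_smul {x : Module.End k V} {v : V} {L : ℕ} (hv : (x ^ L) v = 0)
    {g : Fin L → k} {t : ℕ} (hg : ∀ i : Fin L, i + t + 1 < L → g i = 0) :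
    ∃ c : k, (x ^ t) (∑ i, g i • (x ^ (i : ℕ)) v) = c • (x ^ (L - 1)) v ∧
      ∀ i : Fin L, i + t + 1 = L → c = g i := by
  have hterm (i : Fin L) (hi : i + t + 1 ≠ L) : (x ^ t) (g i • (x ^ (i : ℕ)) v) = 0 := by
    rcases hi.lt_or_gt with hi | hi
    · rw [hg i hi, zero_smul, map_zero]
    · rw [map_smul, ← Module.End.mul_apply, ← pow_add,
        pow_apply_eq_zero_of_le hv (by omega), smul_zero]
  rw [map_sum]
  by_cases hL : t + 1 ≤ L
  · let i₀ : Fin L := ⟨L - (t + 1), by omega⟩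
    refine ⟨g i₀, ?_, fun i hi => congrArg g (Fin.ext (by simp only [i₀]; omega))⟩
    rw [Fintype.sum_eq_single i₀ fun i hi => hterm i fun h => hi (Fin.ext (by simp [i₀]; omega)),
      map_smul, ← Module.End.mul_apply, ← pow_add]
    congr
    simp only [i₀]
    omega
  · exact ⟨0, by rw [Finset.sum_eq_zero fun i _ => hterm i (by omega), zero_smul],
      fun i hi => absurd hi (by omega)⟩

namespace IsJordanChains

variable {x : Module.End k V} {v : ι → V} {L : ι → ℕ}

lemma linearIndependent [Finite ι] (h : IsJordanChains x v L) :
    LinearIndependent k fun p : (Σ l, Fin (L l)) => (x ^ (p.2 : ℕ)) (v p.1) := by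
  classical
  have := Fintype.ofFinite ι
  refine Fintype.linearIndependent_iff.2 fun g hg => by_contra fun hne => ?_
  push Not at hne
  -- Among the nonzero coefficients, take one furthest from the end of its chain.
  obtain ⟨⟨l₀, i₀⟩, hp, hmax⟩ := Finset.exists_max_image {p | g p ≠ 0} (fun p => L p.1 - p.2)
    (hne.imp fun p hp => by simpa using hp)
  simp only [Finset.mem_filter, Finset.mem_univ, true_and] at hp hmax
  choose c hc hcg using fun l => exists_pow_sum_smul_pow_eq_smul (t := L l₀ - i₀ - 1)
    (h.pow_eq_zero l) (g := fun i => g ⟨l, i⟩)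
    fun i hi => by_contra fun hgi => absurd (hmax ⟨l, i⟩ hgi) (by simp only; omega)
  have hsum : ∑ l, c l • (x ^ (L l - 1)) (v l) = 0 := by
    simp only [← hc, ← map_sum]
    rw [← Fintype.sum_sigma' fun l i => g ⟨l, i⟩ • (x ^ (i : ℕ)) (v l), hg, map_zero]
  exact hp ((hcg l₀ i₀ (by omega)).symm.trans (Fintype.linearIndependent_iff.1 h.socle c hsum l₀))

lemma finrank_map_pow_chainSpan [Fintype ι] (h : IsJordanChains x v L) (n : ℕ) :
    Module.finrank k ((chainSpan x v).map (x ^ n)) = ∑ l, (L l - n) := by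
  have hli : LinearIndependent k fun p : (Σ l, Fin (L l - n)) =>
      (x ^ (p.2 : ℕ)) ((x ^ n) (v p.1)) := by
    let f (p : Σ l, Fin (L l - n)) : Σ l, Fin (L l) := ⟨p.1, p.2 + n, by omega⟩
    have hf : Function.Injective f := by
      rintro ⟨l, i⟩ ⟨l', i'⟩ hll
      obtain ⟨rfl, hi⟩ := Sigma.mk.inj_iff.1 hll
      simpa [Fin.ext_iff] using hi
    convert h.linearIndependent.comp f hf using 2 with p
    simp [f, pow_add]
  rw [map_pow_chainSpan, chainSpan_eq_span_range fun l => ?_, finrank_span_eq_card hli]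
  · simp
  · rw [← Module.End.mul_apply, ← pow_add]
    exact pow_apply_eq_zero_of_le (h.pow_eq_zero l) (by omega)

lemma finrank_chainSpan [Fintype ι] (h : IsJordanChains x v L) :
    Module.finrank k (chainSpan x v) = ∑ l, L l := by
  have h0 := h.finrank_map_pow_chainSpan 0
  rwa [pow_zero, Module.End.one_eq_id, Submodule.map_id] at h0

end IsJordanChains

/-- The ranks of the powers of `x` are those of a nilpotent endomorphism whose Jordan blocks have
the sizes listed in `Λ`. -/
def HasJordanType (x : Module.End k V) (Λ : Multiset ℕ) : Prop :=
  ∀ n, Module.finrank k (LinearMap.range (x ^ n)) = (Λ.map (· - n)).sum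

lemma IsJordanChains.hasJordanType [FiniteDimensional k V] [Fintype ι] {x : Module.End k V}
    {v : ι → V} {L : ι → ℕ} (h : IsJordanChains x v L) (hL : ∑ l, L l = Module.finrank k V) :
    HasJordanType x (Finset.univ.val.map L) := by
  intro n
  have htop : chainSpan x v = ⊤ :=
    Submodule.eq_top_of_finrank_eq (h.finrank_chainSpan.trans hL)
  rw [← Submodule.map_top, ← htop, h.finrank_map_pow_chainSpan, Multiset.map_map]
  rfl

/-- Pairwise orthogonal normalised Jordan chains of the odd lengths `2 * m l + 1`. -/
structure IsOrthChains (B : BilinForm k V) (x : Module.End k V) (e : ι → V) (m : ι → ℕ) :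
    Prop where
  pow_eq_zero : ∀ l, (x ^ (2 * m l + 1)) (e l) = 0
  pairing_self : ∀ l n, B (e l) ((x ^ n) (e l)) = if n = 2 * m l then 1 else 0
  pairing_of_ne : ∀ l l' n, l ≠ l' → B (e l) ((x ^ n) (e l')) = 0

namespace IsOrthChains

variable {B : BilinForm k V} {x : Module.End k V} {e : ι → V} {m : ι → ℕ}

lemma comp (h : IsOrthChains B x e m) {f : κ → ι} (hf : Function.Injective f) :
    IsOrthChains B x (e ∘ f) (m ∘ f) where
  pow_eq_zero l := h.pow_eq_zero (f l)
  pairing_self l := h.pairing_self (f l)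
  pairing_of_ne _ _ n hl := h.pairing_of_ne _ _ n (hf.ne hl)

lemma pairing_pow_pow [DecidableEq ι] (h : IsOrthChains B x e m)
    (hx : x ∈ B.skewAdjointSubmodule) (p q : Σ l, Fin (2 * m l + 1)) :
    B ((x ^ (2 * m p.1 - p.2)) (e p.1)) ((x ^ (q.2 : ℕ)) (e q.1)) =
      if p = q then (-1) ^ (2 * m p.1 - p.2) else 0 := by
  obtain ⟨l, i, hi⟩ := p
  obtain ⟨l', i', hi'⟩ := q
  rw [apply_pow_apply_of_mem_skewAdjointSubmodule hx, ← Module.End.mul_apply, ← pow_add]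
  by_cases hl : l = l'
  · subst hl
    rw [h.pairing_self, mul_ite, mul_one, mul_zero]
    congr 1
    simp only [Sigma.mk.injEq, heq_eq_eq, Fin.mk.injEq, true_and, eq_iff_iff]
    omega
  · rw [h.pairing_of_ne _ _ _ hl, mul_zero, if_neg fun hll => hl (congrArg Sigma.fst hll)]

lemma eq_zero_of_mem_chainSpan [Finite ι] (h : IsOrthChains B x e m)
    (hx : x ∈ B.skewAdjointSubmodule) {v : V} (hv : v ∈ chainSpan x e)
    (hv' : ∀ w ∈ chainSpan x e, B w v = 0) : v = 0 := by
  classical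
  have := Fintype.ofFinite ι
  rw [chainSpan_eq_span_range h.pow_eq_zero, Submodule.mem_span_range_iff_exists_fun] at hv
  obtain ⟨c, rfl⟩ := hv
  refine Finset.sum_eq_zero fun p _ => ?_
  have hp := hv' _ (pow_apply_mem_chainSpan x e p.1 (2 * m p.1 - p.2))
  simp only [map_sum, map_smul, h.pairing_pow_pow hx p, smul_eq_mul, mul_ite, mul_zero,
    Finset.sum_ite_eq, Finset.mem_univ, if_true] at hp
  have hcp : c p = 0 := (mul_eq_zero.1 hp).resolve_right (pow_ne_zero _ (neg_ne_zero.2 one_ne_zero))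
  rw [hcp, zero_smul]

lemma isJordanChains (h : IsOrthChains B x e m) :
    IsJordanChains x e fun l => 2 * m l + 1 where
  pos _ := Nat.le_add_left _ _
  pow_eq_zero := h.pow_eq_zero
  socle := LinearIndependent.of_pairwise_dual_eq_zero_one _ (fun l => B (e l))
    (fun _ _ hl => h.pairing_of_ne _ _ _ hl) fun l => by simp [h.pairing_self]

lemma isCompl_orthogonal [FiniteDimensional k V] [Finite ι] (h : IsOrthChains B x e m)
    (hB : B.IsSymm) (hx : x ∈ B.skewAdjointSubmodule) :
    IsCompl (chainSpan x e) (B.orthogonal (chainSpan x e)) := by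
  have hrefl : B.IsRefl := hB.isRefl
  refine LinearMap.BilinForm.isCompl_orthogonal_of_restrict_nondegenerate hrefl ⟨?_, ?_⟩
  · exact fun v hv => Subtype.ext
      (h.eq_zero_of_mem_chainSpan hx v.2 fun w hw => hrefl _ _ (hv ⟨w, hw⟩))
  · exact fun v hv => Subtype.ext (h.eq_zero_of_mem_chainSpan hx v.2 fun w hw => hv ⟨w, hw⟩)

end IsOrthChains

lemma orthogonal_mem_invtSubmodule {B : BilinForm k V} {x : Module.End k V}
    (hx : x ∈ B.skewAdjointSubmodule) {U : Submodule k V} (hU : U ∈ x.invtSubmodule) :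
    B.orthogonal U ∈ x.invtSubmodule := fun v hv w hw => by
  have hxw := mem_skewAdjointSubmodule_iff_apply.1 hx w v
  rw [hv _ (hU hw)] at hxw
  exact neg_eq_zero.1 hxw.symm

lemma finrank_range_pow_of_isCompl [FiniteDimensional k V] {U U' : Submodule k V}
    (hUU' : IsCompl U U') {x : Module.End k V} (hU : U ∈ x.invtSubmodule)
    (hU' : U' ∈ x.invtSubmodule) (n : ℕ) :
    Module.finrank k (LinearMap.range (x ^ n)) =
      Module.finrank k (U.map (x ^ n)) + Module.finrank k (U'.map (x ^ n)) := by
  have map_le {W : Submodule k V} (hW : W ∈ x.invtSubmodule) : W.map (x ^ n) ≤ W :=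
    Submodule.map_le_iff_le_comap.2 fun v hv => pow_apply_mem_of_mem_invtSubmodule hW hv n
  have hdisj : U.map (x ^ n) ⊓ U'.map (x ^ n) = ⊥ :=
    (hUU'.disjoint.mono (map_le hU) (map_le hU')).eq_bot
  rw [← Submodule.finrank_sup_add_finrank_inf_eq, hdisj, finrank_bot, add_zero,
    ← Submodule.map_sup, hUU'.sup_eq_top, Submodule.map_top]

lemma map_pow_add_eq_of_apply_eq_zero {x z : Module.End k V} {U : Submodule k V}
    (hU : U ∈ x.invtSubmodule) (hz : ∀ v ∈ U, z v = 0) (n : ℕ) :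
    U.map ((x + z) ^ n) = U.map (x ^ n) := by
  refine SetLike.coe_injective (Set.image_congr fun v hv => ?_)
  induction n with
  | zero => rfl
  | succ n ih =>
    rw [pow_succ', pow_succ', Module.End.mul_apply, Module.End.mul_apply, ih,
      LinearMap.add_apply, hz _ (pow_apply_mem_of_mem_invtSubmodule hU hv n), add_zero]

lemma IsOrthChains.hasJordanType_add [FiniteDimensional k V] [Fintype ι] [Fintype κ]
    {B : BilinForm k V} (hB : B.IsSymm) {x : Module.End k V} (hx : x ∈ B.skewAdjointSubmodule)
    {e : ι → V} {m : ι → ℕ} (h : IsOrthChains B x e m) {z : Module.End k V}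
    (hz : ∀ v, z v ∈ chainSpan x e) (hz' : ∀ v ∈ B.orthogonal (chainSpan x e), z v = 0)
    {v : κ → V} {L : κ → ℕ} (hv : ∀ l, v l ∈ chainSpan x e) (hJ : IsJordanChains (x + z) v L)
    (hL : ∑ l, L l = ∑ l, (2 * m l + 1)) {Λ : Multiset ℕ}
    (hΛ : HasJordanType x (Finset.univ.val.map (fun l => 2 * m l + 1) + Λ)) :
    HasJordanType (x + z) (Finset.univ.val.map L + Λ) := by
  intro n
  have hcompl := h.isCompl_orthogonal hB hx
  have hxU := chainSpan_mem_invtSubmodule x e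
  have hxU' := orthogonal_mem_invtSubmodule hx hxU
  have hU : chainSpan x e ∈ (x + z).invtSubmodule := fun v hv =>
    (chainSpan x e).add_mem (hxU hv) (hz v)
  have hU' : B.orthogonal (chainSpan x e) ∈ (x + z).invtSubmodule := fun v hv => by
    simpa [hz' v hv] using hxU' hv
  have hspan : chainSpan (x + z) v = chainSpan x e :=
    Submodule.eq_of_le_of_finrank_eq (chainSpan_le hU hv) <| by
      rw [hJ.finrank_chainSpan, hL, h.isJordanChains.finrank_chainSpan]
  have hJ' := hJ.finrank_map_pow_chainSpan n
  rw [hspan] at hJ'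
  have hrank := hΛ n
  rw [finrank_range_pow_of_isCompl hcompl hxU hxU', h.isJordanChains.finrank_map_pow_chainSpan,
    Multiset.map_add, Multiset.sum_add, Multiset.map_map] at hrank
  rw [finrank_range_pow_of_isCompl hcompl hU hU', map_pow_add_eq_of_apply_eq_zero hxU' hz',
    hJ', Multiset.map_add, Multiset.sum_add, Multiset.map_map]
  exact congrArg _ (Nat.add_left_cancel (n := ∑ l, (2 * m l + 1 - n)) hrank)

end Chains

section Deformation

open LinearMap (BilinForm)

variable {k V ι κ : Type*} [Field k] [AddCommGroup V] [Module k V] {B : BilinForm k V}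
  {x : Module.End k V}

/-- The skew-adjoint endomorphism `u ∧ v : w ↦ B(u, w) v - B(v, w) u`. -/
def wedgeEnd (B : BilinForm k V) (u v : V) : Module.End k V :=
  (B u).smulRight v - (B v).smulRight u

@[simp]
lemma wedgeEnd_apply (B : BilinForm k V) (u v w : V) :
    wedgeEnd B u v w = B u w • v - B v w • u := rfl

lemma wedgeEnd_mem_skewAdjointSubmodule (hB : B.IsSymm) (u v : V) :
    wedgeEnd B u v ∈ B.skewAdjointSubmodule :=
  mem_skewAdjointSubmodule_iff_apply.2 fun a b => by
    simp only [wedgeEnd_apply, map_sub, map_smul, LinearMap.sub_apply, LinearMap.smul_apply,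
      smul_eq_mul, hB.eq a u, hB.eq a v]
    ring

lemma IsOrthChains.hasJordanType_add_smul_wedgeEnd [FiniteDimensional k V] [Fintype ι] [Fintype κ]
    (hB : B.IsSymm) (hx : x ∈ B.skewAdjointSubmodule) {e : ι → V} {m : ι → ℕ}
    (h : IsOrthChains B x e m) {u₁ u₂ : V} (hu₁ : u₁ ∈ chainSpan x e) (hu₂ : u₂ ∈ chainSpan x e)
    {t : k} {v : κ → V} {L : κ → ℕ} (hv : ∀ l, v l ∈ chainSpan x e)
    (hJ : IsJordanChains (x + t • wedgeEnd B u₁ u₂) v L)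
    (hL : ∑ l, L l = ∑ l, (2 * m l + 1)) {Λ : Multiset ℕ}
    (hΛ : HasJordanType x (Finset.univ.val.map (fun l => 2 * m l + 1) + Λ)) :
    HasJordanType (x + t • wedgeEnd B u₁ u₂) (Finset.univ.val.map L + Λ) := by
  refine h.hasJordanType_add hB hx (fun w => ?_) (fun w hw => ?_) hv hJ hL hΛ
  · exact Submodule.smul_mem _ _ (sub_mem (Submodule.smul_mem _ _ hu₂) (Submodule.smul_mem _ _ hu₁))
  · rw [LinearMap.smul_apply, wedgeEnd_apply, LinearMap.BilinForm.mem_orthogonal_iff.1 hw u₁ hu₁,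
      LinearMap.BilinForm.mem_orthogonal_iff.1 hw u₂ hu₂, zero_smul, zero_smul, sub_zero, smul_zero]

lemma apply_pow_apply_comm (hB : B.IsSymm) (hx : x ∈ B.skewAdjointSubmodule) (n : ℕ) (v w : V) :
    B v ((x ^ n) w) = (-1) ^ n * B w ((x ^ n) v) := by
  rw [← apply_pow_apply_of_mem_skewAdjointSubmodule hx, hB.eq]

/-- Two isotropic vectors generating dual Jordan chains of length `2 * m + 1`. -/
structure IsHyperbolicPair (B : BilinForm k V) (x : Module.End k V) (m : ℕ) (p q : V) : Prop where
  pow_left : (x ^ (2 * m + 1)) p = 0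
  pow_right : (x ^ (2 * m + 1)) q = 0
  left_left : ∀ n, B p ((x ^ n) p) = 0
  right_right : ∀ n, B q ((x ^ n) q) = 0
  right_left : ∀ n, B q ((x ^ n) p) = if n = 2 * m then 1 else 0

lemma IsOrthChains.apply_of_ne {e : ι → V} {m : ι → ℕ} (h : IsOrthChains B x e m) {l l' : ι}
    (hl : l ≠ l') : B (e l) (e l') = 0 :=
  h.pairing_of_ne l l' 0 hl

lemma IsOrthChains.isHyperbolicPair [CharZero k] {e : ι → V} {m : ι → ℕ}
    (h : IsOrthChains B x e m) {i : k} (hi : -1 = i * i) {l l' : ι} (hl : l ≠ l')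
    (hm : m l = m l') :
    IsHyperbolicPair B x (m l) (e l + i • e l') ((2 : k)⁻¹ • (e l - i • e l')) := by
  have hll' := h.pairing_of_ne l l'
  have hl'l := h.pairing_of_ne l' l
  refine ⟨?_, ?_, fun n => ?_, fun n => ?_, fun n => ?_⟩
  · simp [h.pow_eq_zero l, hm ▸ h.pow_eq_zero l']
  · simp [h.pow_eq_zero l, hm ▸ h.pow_eq_zero l']
  all_goals
    simp only [map_add, map_sub, map_smul, LinearMap.add_apply, LinearMap.sub_apply,
      LinearMap.smul_apply, smul_eq_mul, h.pairing_self, hll' n hl, hl'l n hl.symm, hm]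
    generalize (if n = 2 * m l' then (1 : k) else 0) = δ
  · linear_combination -δ * hi
  · linear_combination -(δ / 4) * hi
  · linear_combination (δ / 2) * hi

/-- The vectors used to deform `x` to `x + t (q ∧ ν)`: a hyperbolic pair `p`, `q`, an isotropic
`ν ∈ ker x` and a vector `w` pairing with it. The deformation prolongs the chain of `p` by `ν` and
the chain of `w` by the chain of `q`. -/
structure IsDeformationFrame (B : BilinForm k V) (x : Module.End k V) (m : ℕ) (p q ν w : V) : Prop
    extends IsHyperbolicPair B x m p q where
  map_ker : x ν = 0
  pow_partner : (x ^ (2 * m + 1)) w = 0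
  ker_partner : B ν w = 1
  ker_ker : B ν ν = 0
  ker_left : B ν p = 0
  ker_right : B ν q = 0
  left_partner : ∀ n, B p ((x ^ n) w) = 0
  right_partner : ∀ n, B q ((x ^ n) w) = 0

namespace IsDeformationFrame

variable {m : ℕ} {p q ν w : V}

lemma ker_map (h : IsDeformationFrame B x m p q ν w) (hx : x ∈ B.skewAdjointSubmodule) (v : V) :
    B ν (x v) = 0 := by
  rw [← neg_eq_zero, ← mem_skewAdjointSubmodule_iff_apply.1 hx, h.map_ker, map_zero,
    LinearMap.zero_apply]

lemma ker_pow (h : IsDeformationFrame B x m p q ν w) (hx : x ∈ B.skewAdjointSubmodule) {v : V}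
    (hv : B ν v = 0) : ∀ n, B ν ((x ^ n) v) = 0
  | 0 => hv
  | n + 1 => by rw [pow_succ', Module.End.mul_apply, h.ker_map hx]

lemma deformed_ker (h : IsDeformationFrame B x m p q ν w) (hB : B.IsSymm) (t : k) :
    (x + t • wedgeEnd B q ν) ν = 0 := by
  simp [h.map_ker, h.ker_ker, hB.eq q ν, h.ker_right]

lemma deformed_pow_left (h : IsDeformationFrame B x m p q ν w) (hx : x ∈ B.skewAdjointSubmodule)
    (t : k) {i : ℕ} (hi : i ≤ 2 * m) : ((x + t • wedgeEnd B q ν) ^ i) p = (x ^ i) p := by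
  induction i with
  | zero => rfl
  | succ i ih =>
    rw [pow_succ', Module.End.mul_apply, ih (by omega), pow_succ' x]
    simp [h.right_left, h.ker_pow hx h.ker_left, show i ≠ 2 * m by omega]

lemma deformed_map_pow_left (h : IsDeformationFrame B x m p q ν w)
    (hx : x ∈ B.skewAdjointSubmodule) (t : k) :
    (x + t • wedgeEnd B q ν) ((x ^ (2 * m)) p) = t • ν := by
  rw [LinearMap.add_apply, ← Module.End.mul_apply x, ← pow_succ', h.pow_left]
  simp [h.right_left, h.ker_pow hx h.ker_left]

lemma deformed_pow_left_last (h : IsDeformationFrame B x m p q ν w)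
    (hx : x ∈ B.skewAdjointSubmodule) (t : k) :
    ((x + t • wedgeEnd B q ν) ^ (2 * m + 1)) p = t • ν := by
  rw [pow_succ', Module.End.mul_apply, h.deformed_pow_left hx t le_rfl,
    h.deformed_map_pow_left hx]

lemma deformed_pow_partner (h : IsDeformationFrame B x m p q ν w)
    (hx : x ∈ B.skewAdjointSubmodule) (t : k) (i : ℕ) :
    ((x + t • wedgeEnd B q ν) ^ (i + 1)) w = (x ^ (i + 1)) w - t • (x ^ i) q := by
  induction i with
  | zero => simp [h.ker_partner, show B q w = 0 from h.right_partner 0, sub_eq_add_neg]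
  | succ i ih =>
    have hker : B ν ((x ^ (i + 1)) w) = 0 := by
      rw [pow_succ', Module.End.mul_apply, h.ker_map hx]
    rw [pow_succ' _ (i + 1), Module.End.mul_apply, ih, map_sub, map_smul, LinearMap.add_apply,
      LinearMap.add_apply, LinearMap.smul_apply, LinearMap.smul_apply, wedgeEnd_apply,
      wedgeEnd_apply, h.right_right, h.ker_pow hx h.ker_right, h.right_partner, hker,
      pow_succ' x (i + 1), pow_succ' x i, Module.End.mul_apply, Module.End.mul_apply]
    module

lemma deformed_pow_partner_last (h : IsDeformationFrame B x m p q ν w)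
    (hx : x ∈ B.skewAdjointSubmodule) (t : k) :
    ((x + t • wedgeEnd B q ν) ^ (2 * m + 1)) w = -(t • (x ^ (2 * m)) q) := by
  rw [h.deformed_pow_partner hx, h.pow_partner, zero_sub]

lemma deformed_pow_left_eq_zero (h : IsDeformationFrame B x m p q ν w) (hB : B.IsSymm)
    (hx : x ∈ B.skewAdjointSubmodule) (t : k) :
    ((x + t • wedgeEnd B q ν) ^ (2 * m + 2)) p = 0 := by
  rw [pow_succ', Module.End.mul_apply, h.deformed_pow_left_last hx, map_smul, h.deformed_ker hB,
    smul_zero]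

lemma deformed_pow_partner_eq_zero (h : IsDeformationFrame B x m p q ν w)
    (hx : x ∈ B.skewAdjointSubmodule) (t : k) :
    ((x + t • wedgeEnd B q ν) ^ (2 * m + 2)) w = 0 := by
  rw [h.deformed_pow_partner hx, h.pow_right,
    pow_apply_eq_zero_of_le h.pow_partner (Nat.le_succ _), smul_zero, sub_zero]

lemma right_ker (h : IsDeformationFrame B x m p q ν w) (hB : B.IsSymm) : B q ν = 0 := by
  rw [hB.eq, h.ker_right]

lemma left_ker (h : IsDeformationFrame B x m p q ν w) (hB : B.IsSymm) : B p ν = 0 := by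
  rw [hB.eq, h.ker_left]

lemma partner_ker (h : IsDeformationFrame B x m p q ν w) (hB : B.IsSymm) : B w ν = 1 := by
  rw [hB.eq, h.ker_partner]

lemma left_pow_right (h : IsDeformationFrame B x m p q ν w) (hB : B.IsSymm)
    (hx : x ∈ B.skewAdjointSubmodule) : B p ((x ^ (2 * m)) q) = 1 := by
  rw [apply_pow_apply_comm hB hx, h.right_left, if_pos rfl, mul_one, pow_mul, neg_one_sq, one_pow]

lemma partner_pow_right (h : IsDeformationFrame B x m p q ν w) (hB : B.IsSymm)
    (hx : x ∈ B.skewAdjointSubmodule) (n : ℕ) : B w ((x ^ n) q) = 0 := by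
  rw [apply_pow_apply_comm hB hx, h.right_partner, mul_zero]

lemma partner_pow_left (h : IsDeformationFrame B x m p q ν w) (hB : B.IsSymm)
    (hx : x ∈ B.skewAdjointSubmodule) (n : ℕ) : B w ((x ^ n) p) = 0 := by
  rw [apply_pow_apply_comm hB hx, h.left_partner, mul_zero]

lemma isJordanChains_two (h : IsDeformationFrame B x m p q ν w) (hB : B.IsSymm)
    (hx : x ∈ B.skewAdjointSubmodule) {t : k} (ht : t ≠ 0) :
    IsJordanChains (x + t • wedgeEnd B q ν) ![p, w] ![2 * m + 2, 2 * m + 2] where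
  pos := by simp [Fin.forall_fin_two]
  pow_eq_zero := by
    simp [Fin.forall_fin_two, h.deformed_pow_left_eq_zero hB hx, h.deformed_pow_partner_eq_zero hx]
  socle := by
    refine .of_pairwise_dual_eq_zero_one _ ![t⁻¹ • B w, -t⁻¹ • B p] ?_ ?_
    all_goals simp [Pairwise, Fin.forall_fin_two, h.deformed_pow_left_last hx,
      h.deformed_pow_partner_last hx, h.left_ker hB, h.partner_ker hB, h.left_pow_right hB hx,
      h.partner_pow_right hB hx, ht]

lemma isJordanChains_three [CharZero k] (h : IsDeformationFrame B x m p q ν w) (hB : B.IsSymm)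
    (hx : x ∈ B.skewAdjointSubmodule) (hν : (x ^ 2) w = ν) {t : k} (ht : t ≠ 0) :
    IsJordanChains (x + t • wedgeEnd B q ν) ![p, w, t • x w - (x ^ (2 * m)) p]
      ![2 * m + 2, 2 * m + 2, 1] where
  pos := by simp [Fin.forall_fin_succ]
  pow_eq_zero := by
    have hqw : B q (x w) = 0 := h.right_partner 1
    have hlast : (x + t • wedgeEnd B q ν) (t • x w - (x ^ (2 * m)) p) = 0 := by
      have hmap : (x + t • wedgeEnd B q ν) (x w) = ν := by
        rw [LinearMap.add_apply, LinearMap.smul_apply, wedgeEnd_apply, hqw, h.ker_map hx, ← hν, sq,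
          Module.End.mul_apply]
        module
      rw [map_sub, map_smul, hmap, h.deformed_map_pow_left hx, sub_self]
    simpa [Fin.forall_fin_succ, h.deformed_pow_left_eq_zero hB hx,
      h.deformed_pow_partner_eq_zero hx] using hlast
  socle := by
    have hqw : B q (x w) = 0 := h.right_partner 1
    have hpw : B p (x w) = 0 := h.left_partner 1
    have hww : B w (x w) = 0 :=
      self_eq_neg.1 (by simpa using apply_pow_apply_comm hB hx 1 w w)
    refine .of_pairwise_dual_eq_zero_one _ ![t⁻¹ • B w, -t⁻¹ • B p, -B q] ?_ ?_
    all_goals simp [Pairwise, Fin.forall_fin_succ, h.deformed_pow_left_last hx,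
      h.deformed_pow_partner_last hx, h.left_ker hB, h.partner_ker hB, h.left_pow_right hB hx,
      h.partner_pow_right hB hx, ht, hww, hpw, hqw, h.right_left, h.right_right, h.left_left,
      h.right_ker hB, h.partner_pow_left hB hx]

end IsDeformationFrame

lemma IsOrthChains.isDeformationFrame_fin_four [CharZero k] {e : Fin 4 → V} {m : ℕ}
    (h : IsOrthChains B x e ![m, m, 0, 0]) (hB : B.IsSymm) {i : k} (hi : -1 = i * i) :
    IsDeformationFrame B x m (e 0 + i • e 1) ((2 : k)⁻¹ • (e 0 - i • e 1)) (e 2 + i • e 3)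
      ((2 : k)⁻¹ • (e 2 - i • e 3)) :=
  have h' := h.isHyperbolicPair hi (l := 2) (l' := 3) (by decide) rfl
  { toIsHyperbolicPair := h.isHyperbolicPair hi (l := 0) (l' := 1) (by decide) rfl
    map_ker := by simpa using h'.pow_left
    pow_partner := pow_apply_eq_zero_of_le h'.pow_right (by simp)
    ker_partner := (hB.eq _ _).trans (h'.right_left 0)
    ker_ker := h'.left_left 0
    ker_left := by simp [h.apply_of_ne]
    ker_right := by simp [h.apply_of_ne]
    left_partner n := by simp [h.pairing_of_ne]
    right_partner n := by simp [h.pairing_of_ne] }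

lemma IsOrthChains.isDeformationFrame_fin_three [CharZero k] {e : Fin 3 → V} {m : ℕ}
    (h : IsOrthChains B x e ![m, m, 1]) (hB : B.IsSymm) (hx : x ∈ B.skewAdjointSubmodule)
    (hm : 1 ≤ m) {i : k} (hi : -1 = i * i) :
    IsDeformationFrame B x m (e 0 + i • e 1) ((2 : k)⁻¹ • (e 0 - i • e 1)) ((x ^ 2) (e 2))
      (e 2) where
  toIsHyperbolicPair := h.isHyperbolicPair hi (l := 0) (l' := 1) (by decide) rfl
  map_ker := by rw [← Module.End.mul_apply, ← pow_succ']; exact h.pow_eq_zero 2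
  pow_partner := pow_apply_eq_zero_of_le (h.pow_eq_zero 2) (by simpa using hm)
  ker_partner := by rw [hB.eq, h.pairing_self]; rfl
  ker_ker := by
    rw [apply_pow_apply_of_mem_skewAdjointSubmodule hx, ← Module.End.mul_apply, ← pow_add,
      h.pairing_self]
    simp
  ker_left := by simp [hB.eq ((x ^ 2) (e 2)), h.pairing_of_ne]
  ker_right := by simp [hB.eq ((x ^ 2) (e 2)), h.pairing_of_ne]
  left_partner n := by simp [h.pairing_of_ne]
  right_partner n := by simp [h.pairing_of_ne]

lemma IsOrthChains.exists_hasJordanType_deformation_fin_four [CharZero k] [FiniteDimensional k V]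
    (hi : IsSquare (-1 : k)) (hB : B.IsSymm) (hx : x ∈ B.skewAdjointSubmodule) {e : Fin 4 → V}
    {m : ℕ} (h : IsOrthChains B x e ![m, m, 0, 0]) {Λ : Multiset ℕ}
    (hΛ : HasJordanType x ({2 * m + 1, 2 * m + 1, 1, 1} + Λ)) :
    ∃ z ∈ B.skewAdjointSubmodule, ∀ t : k, t ≠ 0 →
      HasJordanType (x + t • z) ({2 * m + 2, 2 * m + 2} + Λ) := by
  obtain ⟨i, hi⟩ := hi
  have hmem := mem_chainSpan x e
  have hadd (a b) : e a + i • e b ∈ chainSpan x e :=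
    add_mem (hmem a) (Submodule.smul_mem _ i (hmem b))
  have hsub (a b) : (2 : k)⁻¹ • (e a - i • e b) ∈ chainSpan x e :=
    Submodule.smul_mem _ _ (sub_mem (hmem a) (Submodule.smul_mem _ i (hmem b)))
  refine ⟨_, wedgeEnd_mem_skewAdjointSubmodule hB ((2 : k)⁻¹ • (e 0 - i • e 1)) (e 2 + i • e 3),
    fun t ht => ?_⟩
  exact h.hasJordanType_add_smul_wedgeEnd hB hx (hsub 0 1) (hadd 2 3)
    (Fin.forall_fin_two.2 ⟨hadd 0 1, hsub 2 3⟩)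
    ((h.isDeformationFrame_fin_four hB hi).isJordanChains_two hB hx ht)
    (by simp +arith [Fin.sum_univ_succ]) hΛ

lemma IsOrthChains.exists_hasJordanType_deformation_fin_three [CharZero k] [FiniteDimensional k V]
    (hi : IsSquare (-1 : k)) (hB : B.IsSymm) (hx : x ∈ B.skewAdjointSubmodule) {e : Fin 3 → V}
    {m : ℕ} (hm : 1 ≤ m) (h : IsOrthChains B x e ![m, m, 1]) {Λ : Multiset ℕ}
    (hΛ : HasJordanType x ({2 * m + 1, 2 * m + 1, 3} + Λ)) :
    ∃ z ∈ B.skewAdjointSubmodule, ∀ t : k, t ≠ 0 →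
      HasJordanType (x + t • z) ({2 * m + 2, 2 * m + 2, 1} + Λ) := by
  obtain ⟨i, hi⟩ := hi
  have hmem := mem_chainSpan x e
  have hpow := pow_apply_mem_chainSpan x e
  have hp := add_mem (hmem 0) (Submodule.smul_mem _ i (hmem 1))
  have hpowp := pow_apply_mem_of_mem_invtSubmodule (chainSpan_mem_invtSubmodule x e) hp
  have hq := Submodule.smul_mem _ (2 : k)⁻¹ (sub_mem (hmem 0) (Submodule.smul_mem _ i (hmem 1)))
  refine ⟨_, wedgeEnd_mem_skewAdjointSubmodule hB ((2 : k)⁻¹ • (e 0 - i • e 1)) ((x ^ 2) (e 2)),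
    fun t ht => ?_⟩
  exact h.hasJordanType_add_smul_wedgeEnd hB hx hq (hpow 2 2)
    (Fin.forall_fin_succ.2 ⟨hp, Fin.forall_fin_two.2
      ⟨hmem 2, sub_mem (Submodule.smul_mem _ t (hpow 2 1)) (hpowp (2 * m))⟩⟩)
    ((h.isDeformationFrame_fin_three hB hx hm hi).isJordanChains_three hB hx rfl ht)
    (by simp +arith [Fin.sum_univ_succ]) hΛ

end Deformation

section SkewPairs

open LinearMap (BilinForm)

section Prod

variable {k V V' ι ι' : Type*} [Field k] [AddCommGroup V] [Module k V] [AddCommGroup V']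
  [Module k V'] {x : Module.End k V} {x' : Module.End k V'}

lemma prodMap_pow (x : Module.End k V) (x' : Module.End k V') (n : ℕ) :
    (x.prodMap x' : Module.End k (V × V')) ^ n = (x ^ n).prodMap (x' ^ n) :=
  (map_pow (LinearMap.prodMapAlgHom k V V') (x, x') n).symm

lemma finrank_range_prodMap [FiniteDimensional k V] [FiniteDimensional k V']
    (x : Module.End k V) (x' : Module.End k V') :
    Module.finrank k (LinearMap.range (x.prodMap x')) =
      Module.finrank k (LinearMap.range x) + Module.finrank k (LinearMap.range x') := by
  have h := LinearMap.finrank_range_of_inj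
    (f := (LinearMap.range x).subtype.prodMap (LinearMap.range x').subtype)
    (Prod.map_injective.2 ⟨Submodule.subtype_injective _, Submodule.subtype_injective _⟩)
  rwa [LinearMap.range_prodMap, Submodule.range_subtype, Submodule.range_subtype,
    ← LinearMap.range_prodMap, Module.finrank_prod] at h

lemma HasJordanType.prodMap [FiniteDimensional k V] [FiniteDimensional k V'] {Λ Λ' : Multiset ℕ}
    (h : HasJordanType x Λ) (h' : HasJordanType x' Λ') :
    HasJordanType (x.prodMap x') (Λ + Λ') := fun n => by
  rw [prodMap_pow, finrank_range_prodMap, h, h', Multiset.map_add, Multiset.sum_add]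

lemma HasJordanType.smul {Λ : Multiset ℕ} (h : HasJordanType x Λ) {c : k} (hc : c ≠ 0) :
    HasJordanType (c • x) Λ := fun n => by
  rw [smul_pow, LinearMap.range_smul _ _ (pow_ne_zero n hc), h]

lemma IsOrthChains.prodMap {B : BilinForm k V} {B' : BilinForm k V'} {e : ι → V} {m : ι → ℕ}
    {e' : ι' → V'} {m' : ι' → ℕ} (h : IsOrthChains B x e m) (h' : IsOrthChains B' x' e' m') :
    IsOrthChains (prodForm B B') (x.prodMap x')
      (Sum.elim (fun l => (e l, 0)) fun l => (0, e' l)) (Sum.elim m m') where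
  pow_eq_zero := by
    rintro (l | l) <;> simp [prodMap_pow, h.pow_eq_zero, h'.pow_eq_zero]
  pairing_self := by
    rintro (l | l) n
    · simpa [prodMap_pow] using! h.pairing_self l n
    · simpa [prodMap_pow] using! h'.pairing_self l n
  pairing_of_ne := by
    rintro (l | l) (l' | l') n hl
    · simpa [prodMap_pow] using h.pairing_of_ne l l' n (by simpa using hl)
    · simp [prodMap_pow]
    · simp [prodMap_pow]
    · simpa [prodMap_pow] using h'.pairing_of_ne l l' n (by simpa using hl)

lemma IsOrthChains.smul {B : BilinForm k V} {e : ι → V} {m : ι → ℕ} (h : IsOrthChains B x e m)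
    {c : k} (hc : c ≠ 0) : IsOrthChains B (c • x) (fun l => c⁻¹ ^ m l • e l) m where
  pow_eq_zero l := by simp [smul_pow, h.pow_eq_zero]
  pairing_self l n := by
    simp only [smul_pow, LinearMap.smul_apply, map_smul, h.pairing_self, smul_eq_mul]
    split_ifs with hn
    · rw [hn, mul_one, pow_mul', sq, inv_pow]
      field_simp
    · ring
  pairing_of_ne l l' n hl := by simp [smul_pow, h.pairing_of_ne l l' n hl]

end Prod

universe u

variable {k : Type u} [Field k]

/-- A skew-adjoint endomorphism with Jordan type `Λ` and orthogonal chains of lengths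
`2 * m l + 1`; the latter single out blocks to be used by a deformation. -/
structure IsSkewModel {V ι : Type*} [AddCommGroup V] [Module k V] (B : BilinForm k V)
    (x : Module.End k V) (Λ : Multiset ℕ) (m : ι → ℕ) : Prop where
  mem_skewAdjointSubmodule : x ∈ B.skewAdjointSubmodule
  hasJordanType : HasJordanType x Λ
  exists_isOrthChains : ∃ e : ι → V, IsOrthChains B x e m

/-- A pair of skew-adjoint endomorphisms of the same orthogonal space, both modelled on `Λ` and
`m`. -/
structure SkewPair (k : Type u) [Field k] (Λ : Multiset ℕ) {ι : Type} (m : ι → ℕ) where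
  V : Type u
  [addCommGroup : AddCommGroup V]
  [module : Module k V]
  [finiteDimensional : FiniteDimensional k V]
  form : BilinForm k V
  hasOrthonormalBasis : HasOrthonormalBasis form
  x : Module.End k V
  y : Module.End k V
  isSkewModel_x : IsSkewModel form x Λ m
  isSkewModel_y : IsSkewModel form y Λ m

attribute [instance] SkewPair.addCommGroup SkewPair.module SkewPair.finiteDimensional

section IsSkewModel

variable {V V' ι ι' : Type*} [AddCommGroup V] [Module k V] [AddCommGroup V'] [Module k V']
  {B : BilinForm k V} {B' : BilinForm k V'} {x : Module.End k V} {x' : Module.End k V'}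
  {Λ Λ' : Multiset ℕ} {m : ι → ℕ} {m' : ι' → ℕ}

lemma IsSkewModel.prodMap [FiniteDimensional k V] [FiniteDimensional k V']
    (h : IsSkewModel B x Λ m) (h' : IsSkewModel B' x' Λ' m') :
    IsSkewModel (prodForm B B') (x.prodMap x') (Λ + Λ') (Sum.elim m m') where
  mem_skewAdjointSubmodule :=
    prodMap_mem_skewAdjointSubmodule h.mem_skewAdjointSubmodule h'.mem_skewAdjointSubmodule
  hasJordanType := h.hasJordanType.prodMap h'.hasJordanType
  exists_isOrthChains :=
    have ⟨_, he⟩ := h.exists_isOrthChains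
    have ⟨_, he'⟩ := h'.exists_isOrthChains
    ⟨_, he.prodMap he'⟩

lemma IsSkewModel.smul (h : IsSkewModel B x Λ m) {c : k} (hc : c ≠ 0) :
    IsSkewModel B (c • x) Λ m where
  mem_skewAdjointSubmodule := Submodule.smul_mem _ c h.mem_skewAdjointSubmodule
  hasJordanType := h.hasJordanType.smul hc
  exists_isOrthChains := h.exists_isOrthChains.elim fun _ he => ⟨_, he.smul hc⟩

lemma IsSkewModel.comp (h : IsSkewModel B x Λ m) {f : ι' → ι} (hf : Function.Injective f) :
    IsSkewModel B x Λ (m ∘ f) :=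
  { h with exists_isOrthChains := h.exists_isOrthChains.elim fun _ he => ⟨_, he.comp hf⟩ }

lemma IsSkewModel.of_isEmpty [IsEmpty ι] (hx : x ∈ B.skewAdjointSubmodule)
    (hΛ : HasJordanType x Λ) : IsSkewModel B x Λ m :=
  ⟨hx, hΛ, isEmptyElim, isEmptyElim, isEmptyElim, isEmptyElim⟩

end IsSkewModel

/-- Some pair modelled on `Λ` and `m` has trivial centralizer in the skew-adjoint
endomorphisms. -/
def IsRealizable (k : Type u) [Field k] (Λ : Multiset ℕ) {ι : Type} (m : ι → ℕ) : Prop :=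
  ∃ P : SkewPair k Λ m, CentralizerTrivialOn P.form.skewAdjointSubmodule P.x P.y

/-- Some pair modelled on `Λ` and `m` is cyclically rigid. -/
def IsRigidlyRealizable (k : Type u) [Field k] (Λ : Multiset ℕ) {ι : Type} (m : ι → ℕ) : Prop :=
  ∃ (P : SkewPair k Λ m) (s : P.V) (a b : ℕ) (μ : k), IsCyclicallyRigid P.x P.y s a b μ

section IsRealizable

variable {Λ Λ' : Multiset ℕ} {ι ι' : Type} {m : ι → ℕ} {m' : ι' → ℕ}

lemma IsRealizable.comp (h : IsRealizable k Λ m) {f : ι' → ι} (hf : Function.Injective f) :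
    IsRealizable k Λ (m ∘ f) :=
  have ⟨P, hP⟩ := h
  ⟨{ P with isSkewModel_x := P.isSkewModel_x.comp hf
            isSkewModel_y := P.isSkewModel_y.comp hf }, hP⟩

lemma IsRigidlyRealizable.comp (h : IsRigidlyRealizable k Λ m) {f : ι' → ι}
    (hf : Function.Injective f) : IsRigidlyRealizable k Λ (m ∘ f) :=
  have ⟨P, s, a, b, μ, hP⟩ := h
  ⟨{ P with isSkewModel_x := P.isSkewModel_x.comp hf
            isSkewModel_y := P.isSkewModel_y.comp hf }, s, a, b, μ, hP⟩

lemma IsRealizable.add [CharZero k] (h : IsRealizable k Λ m) (h' : IsRigidlyRealizable k Λ' m') :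
    IsRealizable k (Λ + Λ') (Sum.elim m m') := by
  obtain ⟨P, hP⟩ := h
  obtain ⟨Q, s, a, b, μ, hQ⟩ := h'
  obtain ⟨c, hc, hPQ⟩ := hQ.exists_centralizerTrivialOn_prodMap Q.hasOrthonormalBasis hP
  exact ⟨{ V := P.V × Q.V
           form := prodForm P.form Q.form
           hasOrthonormalBasis := P.hasOrthonormalBasis.prodForm Q.hasOrthonormalBasis
           x := P.x.prodMap Q.x
           y := P.y.prodMap (c • Q.y)
           isSkewModel_x := P.isSkewModel_x.prodMap Q.isSkewModel_x
           isSkewModel_y := P.isSkewModel_y.prodMap (Q.isSkewModel_y.smul hc) }, hPQ⟩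

lemma IsRealizable.of_deformation [CharZero k] (h : IsRealizable k Λ m)
    (hdef : ∀ (P : SkewPair k Λ m) (x : Module.End k P.V), IsSkewModel P.form x Λ m →
      ∃ z ∈ P.form.skewAdjointSubmodule, ∀ t : k, t ≠ 0 → HasJordanType (x + t • z) Λ') :
    IsRealizable k Λ' ![] := by
  obtain ⟨P, hP⟩ := h
  obtain ⟨z, hz, hxz⟩ := hdef P P.x P.isSkewModel_x
  obtain ⟨w, hw, hyw⟩ := hdef P P.y P.isSkewModel_y
  obtain ⟨t, ht, hPt⟩ := hP.exists_ne_zero_add_smul z w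
  have hmem {x z : Module.End k P.V} (hx : IsSkewModel P.form x Λ m)
      (hz : z ∈ P.form.skewAdjointSubmodule) : x + t • z ∈ P.form.skewAdjointSubmodule :=
    add_mem hx.mem_skewAdjointSubmodule (Submodule.smul_mem _ t hz)
  exact ⟨{ P with
    x := P.x + t • z
    y := P.y + t • w
    isSkewModel_x := .of_isEmpty (hmem P.isSkewModel_x hz) (hxz t ht)
    isSkewModel_y := .of_isEmpty (hmem P.isSkewModel_y hw) (hyw t ht) }, hPt⟩

lemma IsRealizable.even_pair_of_fin_four [CharZero k] (hi : IsSquare (-1 : k)) {l : ℕ}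
    (h : IsRealizable k ({2 * l + 1, 2 * l + 1, 1, 1} + Λ) ![l, l, 0, 0]) :
    IsRealizable k ({2 * l + 2, 2 * l + 2} + Λ) ![] :=
  h.of_deformation fun P _ hx =>
    have ⟨_, he⟩ := hx.exists_isOrthChains
    he.exists_hasJordanType_deformation_fin_four hi P.hasOrthonormalBasis.isSymm
      hx.mem_skewAdjointSubmodule hx.hasJordanType

lemma IsRealizable.even_pair_of_fin_three [CharZero k] (hi : IsSquare (-1 : k)) {l : ℕ}
    (hl : 1 ≤ l) (h : IsRealizable k ({2 * l + 1, 2 * l + 1, 3} + Λ) ![l, l, 1]) :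
    IsRealizable k ({2 * l + 2, 2 * l + 2, 1} + Λ) ![] :=
  h.of_deformation fun P _ hx =>
    have ⟨_, he⟩ := hx.exists_isOrthChains
    he.exists_hasJordanType_deformation_fin_three hi P.hasOrthonormalBasis.isSymm
      hx.mem_skewAdjointSubmodule hl hx.hasJordanType

end IsRealizable

end SkewPairs

section Reduction

open LinearMap (BilinForm)

lemma mul_mul_transpose_mem_jordanOrbit {k : Type*} [Field k] {N p : ℕ} {lam : Fin p → ℕ}
    {g x : Matrix (Fin N) (Fin N) k} (hg : g * gᵀ = 1) (hx : x ∈ jordanOrbit k N lam) :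
    g * x * gᵀ ∈ jordanOrbit k N lam := fun i hi => by
  have hg' : gᵀ * g = 1 := mul_eq_one_comm.1 hg
  have hpow : (g * x * gᵀ) ^ i = g * x ^ i * gᵀ := Units.conj_pow ⟨g, gᵀ, hg, hg'⟩ x i
  rw [hpow, rank_mul_eq_left_of_isUnit_det _ _ (isUnit_det_of_left_inverse hg),
    rank_mul_eq_right_of_isUnit_det _ _ (isUnit_det_of_left_inverse hg'), hx i hi]

lemma toLin_mem_skewAdjointSubmodule_iff {k V n : Type*} [Field k] [AddCommGroup V] [Module k V]
    [Fintype n] [DecidableEq n] {B : BilinForm k V} {b : Module.Basis n k V}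
    (hb : ∀ i j, B (b i) (b j) = if i = j then 1 else 0) {A : Matrix n n k} :
    Matrix.toLin b b A ∈ B.skewAdjointSubmodule ↔
      A ∈ skewAdjointMatricesSubmodule (1 : Matrix n n k) := by
  have hB : B = Matrix.toLinearMap₂ b b 1 := by
    refine LinearMap.ext_basis b b fun i j => ?_
    rw [Matrix.toLinearMap₂_apply_basis, hb, Matrix.one_apply]
  have hneg : -⇑(Matrix.toLin b b A) = Matrix.toLin b b (-A) := by rw [map_neg]; rfl
  rw [LinearMap.mem_skewAdjointSubmodule, mem_skewAdjointMatricesSubmodule, LinearMap.IsSkewAdjoint,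
    Matrix.IsSkewAdjoint, hneg, hB, isAdjointPair_toLinearMap₂]

theorem IsRealizable.zClosure_eq_soSet {k : Type*} [Field k] [CharZero k]
    (hi : IsSquare (-1 : k)) {N p : ℕ} (hN : 3 ≤ N) {lam : Fin p → ℕ} (hsum : ∑ l, lam l = N)
    {ι : Type} {m : ι → ℕ} (h : IsRealizable k (Finset.univ.val.map lam) m) :
    zClosure (Set.image2 (· + ·) (jordanOrbit k N lam ∩ soSet k N)
      (jordanOrbit k N lam ∩ soSet k N)) = soSet k N := by
  obtain ⟨P, hP⟩ := h
  have hrank {z : Module.End k P.V} (hz : HasJordanType z (Finset.univ.val.map lam)) (i : ℕ) :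
      Module.finrank k (LinearMap.range (z ^ i)) = ∑ l, (lam l - i) := by
    rw [hz, Multiset.map_map]; rfl
  obtain rfl : Module.finrank k P.V = N := by
    have h0 := hrank P.isSkewModel_x.hasJordanType 0
    rwa [pow_zero, Module.End.one_eq_id, LinearMap.range_id, finrank_top,
      Finset.sum_congr rfl fun _ _ => Nat.sub_zero _, hsum] at h0
  obtain ⟨b, hb⟩ := P.hasOrthonormalBasis
  have htoLin (z : Module.End k P.V) : Matrix.toLin b b (LinearMap.toMatrixAlgEquiv b z) = z :=
    Matrix.toLin_toMatrix b b z
  have hmem {z : Module.End k P.V} (hz : IsSkewModel P.form z (Finset.univ.val.map lam) m) :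
      LinearMap.toMatrixAlgEquiv b z ∈ jordanOrbit k _ lam ∩ soSet k _ := by
    refine ⟨fun i _ => ?_, ?_⟩
    · rw [← map_pow, Matrix.rank_eq_finrank_range_toLin _ b b, htoLin,
        hrank hz.hasJordanType]
    · refine mem_skewAdjointMatricesSubmodule_one.1 ((toLin_mem_skewAdjointSubmodule_iff hb).1 ?_)
      rw [htoLin]
      exact hz.mem_skewAdjointSubmodule
  refine zClosure_add_eq_soSet hi hN Set.inter_subset_right ?_ (hmem P.isSkewModel_x)
    (hmem P.isSkewModel_y) (hP.algEquiv _ fun A hA => (toLin_mem_skewAdjointSubmodule_iff hb).2 hA)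
  rintro g z hg ⟨hz, hz' : zᵀ = -z⟩
  refine ⟨mul_mul_transpose_mem_jordanOrbit hg hz, ?_⟩
  change (g * z * gᵀ)ᵀ = -(g * z * gᵀ)
  simp [Matrix.transpose_mul, hz', Matrix.mul_assoc]

end Reduction

section MonomialEnd

open LinearMap (BilinForm)

variable {k J : Type*} [Field k] [DecidableEq J] {S : Finset J}

/-- The coordinate vector of `p` in `S → k`; it is zero if `p ∉ S`. -/
def coordVec (k : Type*) [Field k] (S : Finset J) (p : J) : S → k :=
  fun i => if (i : J) = p then 1 else 0

/-- The endomorphism multiplying the coordinate vector of `p` by `w p` and moving it to `s p`. -/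
def monomialEnd (S : Finset J) (w : J → k) (s : J → J) : Module.End k (S → k) :=
  (Pi.basisFun k S).constr k fun i => w i • coordVec k S (s i)

/-- The bilinear form pairing the coordinate vectors of `p` and `σ p` to `sg p`. -/
def involForm (S : Finset J) (σ : J → J) (sg : J → k) : BilinForm k (S → k) :=
  Matrix.toLinearMap₂' k (Matrix.of fun i j : S => if (j : J) = σ i then sg i else 0)

/-- An involution preserving `S`, with an invariant choice of signs. -/
structure IsSignedInvolution (S : Finset J) (σ : J → J) (sg : J → k) : Prop where
  involutive : Function.Involutive σ
  mapsTo : Set.MapsTo σ S S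
  ne_zero : ∀ p, sg p ≠ 0
  sign_apply : ∀ p, sg (σ p) = sg p

lemma coordVec_coe (i : S) : coordVec k S i = Pi.single i 1 := by
  ext j
  simp [coordVec, Pi.single_apply]

lemma ext_coordVec {W : Type*} [AddCommGroup W] [Module k W] {f g : (S → k) →ₗ[k] W}
    (h : ∀ p ∈ S, f (coordVec k S p) = g (coordVec k S p)) : f = g :=
  (Pi.basisFun k S).ext fun i => by simpa [coordVec_coe] using h i i.2

lemma eq_top_of_coordVec_mem {U : Submodule k (S → k)} (h : ∀ p ∈ S, coordVec k S p ∈ U) :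
    U = ⊤ := by
  rw [eq_top_iff, ← (Pi.basisFun k S).span_eq, Submodule.span_le]
  rintro _ ⟨i, rfl⟩
  simpa [coordVec_coe] using h i i.2

lemma linearIndependent_coordVec {κ : Type*} {c : κ → J} (hc : Function.Injective c)
    (hS : ∀ l, c l ∈ S) : LinearIndependent k fun l => coordVec k S (c l) := by
  convert (Pi.basisFun k S).linearIndependent.comp (fun l => (⟨c l, hS l⟩ : S))
    fun l l' hl => hc (congrArg Subtype.val hl) using 2 with l
  simpa using coordVec_coe ⟨c l, hS l⟩

lemma monomialEnd_coordVec {w : J → k} {s : J → J} {p : J} (hp : p ∈ S) :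
    monomialEnd S w s (coordVec k S p) = w p • coordVec k S (s p) := by
  rw [coordVec_coe ⟨p, hp⟩, ← Pi.basisFun_apply, monomialEnd, Module.Basis.constr_basis]

lemma involForm_coordVec {σ : J → J} {sg : J → k} {p q : J} (hp : p ∈ S) (hq : q ∈ S) :
    involForm S σ sg (coordVec k S p) (coordVec k S q) = if q = σ p then sg p else 0 := by
  rw [coordVec_coe ⟨p, hp⟩, coordVec_coe ⟨q, hq⟩, involForm, Matrix.toLinearMap₂'_apply']
  simp [Matrix.mulVec_single, single_dotProduct]

namespace IsSignedInvolution

variable {σ : J → J} {sg : J → k}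

lemma monomialEnd_mem_skewAdjointSubmodule (h : IsSignedInvolution S σ sg) {w : J → k}
    {s : J → J} (hs : ∀ p ∈ S, w p ≠ 0 → s p ∈ S ∧ s (σ (s p)) = σ p ∧ sg (s p) = -sg p ∧
      w (σ (s p)) = w p) :
    monomialEnd S w s ∈ (involForm S σ sg).skewAdjointSubmodule := by
  have key : involForm S σ sg ∘ₗ monomialEnd S w s =
      -(involForm S σ sg).compl₂ (monomialEnd S w s) := by
    refine ext_coordVec fun p hp => ext_coordVec fun q hq => ?_
    simp only [LinearMap.comp_apply, LinearMap.neg_apply, LinearMap.compl₂_apply,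
      monomialEnd_coordVec hp, monomialEnd_coordVec hq, map_smul, LinearMap.smul_apply,
      smul_eq_mul]
    by_cases hwp : w p = 0
    · by_cases hwq : w q = 0
      · simp [hwp, hwq]
      obtain ⟨hqS, -, -, hw⟩ := hs q hq hwq
      have hne : s q ≠ σ p := fun hsp => hwq (by rw [← hw, hsp, h.involutive, hwp])
      simp [hwp, involForm_coordVec hp hqS, hne]
    · obtain ⟨hpS, hsp, hsg, hw⟩ := hs p hp hwp
      rw [involForm_coordVec hpS hq]
      split_ifs with hqp
      · rw [hqp, hsp, hw, involForm_coordVec hp (h.mapsTo hp), if_pos rfl, hsg]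
        ring
      · by_cases hwq : w q = 0
        · simp [hwq]
        obtain ⟨hqS, hsq, -⟩ := hs q hq hwq
        have hne : s q ≠ σ p := fun hsp' => hqp <| by
          rw [hsp', h.involutive] at hsq
          rw [hsq, h.involutive]
        simp [involForm_coordVec hp hqS, hne]
  exact mem_skewAdjointSubmodule_iff_apply.2 fun v w => by
    simpa using LinearMap.congr_fun₂ key v w

lemma involForm_monomialEnd (h : IsSignedInvolution S σ sg) {w : J → k} {s : J → J}
    (hs : ∀ p ∈ S, s p ∈ S ∧ s (σ p) = σ (s p) ∧ w p * w (σ p) * sg (s p) = sg p)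
    (hinj : Set.InjOn s S) (u v : S → k) :
    involForm S σ sg (monomialEnd S w s u) (monomialEnd S w s v) = involForm S σ sg u v := by
  have key : (involForm S σ sg).compl₁₂ (monomialEnd S w s) (monomialEnd S w s) =
      involForm S σ sg := by
    refine ext_coordVec fun p hp => ext_coordVec fun q hq => ?_
    simp only [LinearMap.compl₁₂_apply, monomialEnd_coordVec hp, monomialEnd_coordVec hq, map_smul,
      LinearMap.smul_apply, smul_eq_mul, involForm_coordVec hp hq,
      involForm_coordVec (hs p hp).1 (hs q hq).1, ← (hs p hp).2.1,
      hinj.eq_iff hq (h.mapsTo hp)]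
    split_ifs with hpq
    · rw [hpq, ← (hs p hp).2.2]
      ring
    · simp
  exact LinearMap.congr_fun₂ key u v

lemma hasOrthonormalBasis [CharZero k] (hi : IsSquare (-1 : k)) (h : IsSignedInvolution S σ sg)
    (hsg : ∀ p, IsSquare (sg p)) : HasOrthonormalBasis (involForm S σ sg) := by
  obtain ⟨i, hi⟩ := hi
  have hi0 : i ≠ 0 := fun h0 => by simp [h0] at hi
  have hi1 : (1 + i) * (1 + i) = 2 * i := by linear_combination -hi
  choose ν hν using fun c : {c : k // IsSquare c} => c.2
  let ρ (p : J) : k := ν ⟨sg p, hsg p⟩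
  have hρ (p : J) : ρ p * ρ p = sg p := (hν _).symm
  have hρ0 (p : J) : ρ p ≠ 0 := fun h0 => h.ne_zero p (by simp [← hρ, h0])
  let b (p : S) : S → k := ((1 + i) * ρ p)⁻¹ • (coordVec k S p + i • coordVec k S (σ p))
  have hb (p q : S) : involForm S σ sg (b p) (b q) = if p = q then 1 else 0 := by
    simp only [b, map_smul, map_add, LinearMap.smul_apply, LinearMap.add_apply, smul_eq_mul,
      involForm_coordVec p.2 q.2, involForm_coordVec p.2 (h.mapsTo q.2),
      involForm_coordVec (h.mapsTo p.2) q.2, involForm_coordVec (h.mapsTo p.2) (h.mapsTo q.2),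
      h.sign_apply, h.involutive p.1, h.involutive.injective.eq_iff, h.involutive.eq_iff (x := q.1)]
    calc
      _ = 2 * i * ((1 + i) * ρ q)⁻¹ * ((1 + i) * ρ p)⁻¹ * if (q : J) = p then sg p else 0 := by
        linear_combination -((1 + i) * ρ q)⁻¹ * ((1 + i) * ρ p)⁻¹ *
          (if (q : J) = σ p then sg p else 0) * hi
      _ = if p = q then 1 else 0 := by
        simp only [← hi1, ← hρ, Subtype.coe_inj, eq_comm (a := q)]
        split_ifs with hpq
        · have hi2 : 1 + i ≠ 0 := fun h0 => by simp [h0, hi0] at hi1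
          have hρp := hρ0 p
          rw [← hpq]
          field_simp
        · simp
  have hli : LinearIndependent k b := .of_pairwise_dual_eq_zero_one b
    (fun p => involForm S σ sg (b p)) (fun p q hpq => by simp [hb, hpq]) fun p => by simp [hb]
  exact .of_basis (basisOfLinearIndependentOfCardEqFinrank' b hli (by simp)) (by simpa using hb)

end IsSignedInvolution

end MonomialEnd

section Conj

open LinearMap (BilinForm)

variable {k V ι : Type*} [Field k] [AddCommGroup V] [Module k V] {B : BilinForm k V}
  {x : Module.End k V} {Λ : Multiset ℕ} {m : ι → ℕ}

lemma conj_pow_apply_apply (T : V ≃ₗ[k] V) (x : Module.End k V) (n : ℕ) (v : V) :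
    (T.conj x ^ n) (T v) = T ((x ^ n) v) := by
  induction n with
  | zero => simp
  | succ n ih => simp [pow_succ', ih, LinearEquiv.conj_apply_apply]

lemma HasJordanType.conj (h : HasJordanType x Λ) (T : V ≃ₗ[k] V) : HasJordanType (T.conj x) Λ := by
  intro n
  have hrange : LinearMap.range (T.conj x ^ n) =
      (LinearMap.range (x ^ n)).map (T : V →ₗ[k] V) := by
    ext v
    rw [LinearMap.mem_range, T.surjective.exists]
    simp only [conj_pow_apply_apply, Submodule.mem_map, LinearMap.mem_range,
      exists_exists_eq_and, LinearEquiv.coe_coe]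
  rw [hrange, LinearEquiv.finrank_map_eq, h n]

lemma IsSkewModel.conj (h : IsSkewModel B x Λ m) {T : V ≃ₗ[k] V}
    (hT : ∀ v w, B (T v) (T w) = B v w) : IsSkewModel B (T.conj x) Λ m where
  mem_skewAdjointSubmodule := mem_skewAdjointSubmodule_iff_apply.2 <| by
    refine T.surjective.forall₂.2 fun v w => ?_
    simpa [LinearEquiv.conj_apply_apply, hT] using
      mem_skewAdjointSubmodule_iff_apply.1 h.mem_skewAdjointSubmodule v w
  hasJordanType := h.hasJordanType.conj T
  exists_isOrthChains := by
    obtain ⟨e, he⟩ := h.exists_isOrthChains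
    refine ⟨T ∘ e, fun l => ?_, fun l n => ?_, fun l l' n hl => ?_⟩
    · simp [conj_pow_apply_apply, he.pow_eq_zero]
    · simpa [conj_pow_apply_apply, hT] using he.pairing_self l n
    · simpa [conj_pow_apply_apply, hT] using he.pairing_of_ne l l' n hl

end Conj

section Block

open LinearMap (BilinForm)

/-- The index set of the coordinates of a block: the interval `[-(m + 2a), m + 2a]`, followed by a
second copy of `D`. -/
def blockIndex (m a : ℕ) (D : Finset ℤ) : Finset (ℤ ⊕ ℤ) :=
  (Finset.Icc (-(m + 2 * a) : ℤ) (m + 2 * a)).disjSum D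

/-- The involution `n ↦ -n` on both copies of the integers. -/
def blockNeg : ℤ ⊕ ℤ → ℤ ⊕ ℤ := Sum.map Neg.neg Neg.neg

/-- The alternating signs of the form on a block. -/
def blockSign (k : Type*) [Field k] (p : ℤ ⊕ ℤ) : k := (-1) ^ p.elim id id

/-- The orthogonal form of a block. -/
def blockForm (k : Type*) [Field k] (m a : ℕ) (D : Finset ℤ) :
    BilinForm k (blockIndex m a D → k) := involForm _ blockNeg (blockSign k)

/-- Whether the nilpotent endomorphism of a block links `n` to `n + 1`: the links form the chain
from `-m` to `m`, `a` chains of length two on either side of it, and nothing else. -/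
abbrev BlockLink (m : ℕ) (n : ℤ) : Prop :=
  (-m ≤ n ∧ n < m) ∨ (n < -m ∧ (n - m) % 2 = 0) ∨ (m < n ∧ (n - m) % 2 = 1)

/-- The nilpotent endomorphism of a block. -/
def blockEnd (k : Type*) [Field k] (m a : ℕ) (D : Finset ℤ) :
    Module.End k (blockIndex m a D → k) :=
  monomialEnd _ (Sum.elim (fun n => if BlockLink m n then 1 else 0) 0) (Sum.map (· + 1) id)

/-- The permutation underlying `blockTwist`. -/
def blockPerm (m a : ℕ) (D : Finset ℤ) : ℤ ⊕ ℤ → ℤ ⊕ ℤ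
  | .inl n =>
    if n < -m then .inl (n + 1) else if m < n then .inl (n - 1)
    else if n = -m then .inl (m + 2 * a) else if n = m then .inl (-(m + 2 * a))
    else if n ∈ D then .inr n else .inl (-n)
  | .inr n => .inl (-n)

/-- The isometry of a block which conjugates `blockEnd` into a second nilpotent endomorphism,
chosen so that the outer chains of the two interlock and the long chain of each joins the ends of
the interval. -/
def blockTwist (k : Type*) [Field k] (m a : ℕ) (D : Finset ℤ) :
    Module.End k (blockIndex m a D → k) :=
  monomialEnd _ (Sum.elim (fun n => if m < n then -1 else 1) 1) (blockPerm m a D)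

variable {k : Type*} [Field k] {m a : ℕ} {D : Finset ℤ}

lemma inl_mem_blockIndex {n : ℤ} :
    Sum.inl n ∈ blockIndex m a D ↔ -(m + 2 * a : ℤ) ≤ n ∧ n ≤ m + 2 * a := by
  simp [blockIndex]

lemma inr_mem_blockIndex {n : ℤ} : Sum.inr n ∈ blockIndex m a D ↔ n ∈ D := by
  simp [blockIndex]

lemma isSquare_blockSign (hi : IsSquare (-1 : k)) (p : ℤ ⊕ ℤ) : IsSquare (blockSign k p) :=
  hi.zpow _

lemma blockSign_blockNeg (p : ℤ ⊕ ℤ) : blockSign k (blockNeg p) = blockSign k p := by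
  have h (n : ℤ) : (-1 : k) ^ (-n) = (-1) ^ n := by rw [← _root_.inv_zpow', inv_neg_one]
  rcases p with n | n <;> exact h n

lemma isSignedInvolution_block (hneg : ∀ d ∈ D, -d ∈ D) :
    IsSignedInvolution (blockIndex m a D) blockNeg (blockSign k) where
  involutive := by rintro (n | n) <;> simp [blockNeg]
  mapsTo := by
    rintro (n | n) hn
    · simp only [Finset.mem_coe, blockNeg, Sum.map_inl, inl_mem_blockIndex] at hn ⊢
      omega
    · simpa [blockNeg, inr_mem_blockIndex] using hneg n (inr_mem_blockIndex.1 hn)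
  ne_zero p := zpow_ne_zero _ (neg_ne_zero.2 one_ne_zero)
  sign_apply := blockSign_blockNeg

lemma blockEnd_mem_skewAdjointSubmodule (hneg : ∀ d ∈ D, -d ∈ D) :
    blockEnd k m a D ∈ (blockForm k m a D).skewAdjointSubmodule := by
  refine (isSignedInvolution_block hneg).monomialEnd_mem_skewAdjointSubmodule ?_
  rintro (n | n) hn hw
  · rw [inl_mem_blockIndex] at hn
    simp only [Sum.elim_inl, ne_eq, ite_eq_right_iff, one_ne_zero, imp_false, not_not] at hw
    have hw' : BlockLink m (-(n + 1)) := by unfold BlockLink at hw ⊢; omega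
    refine ⟨?_, ?_, ?_, ?_⟩
    · rw [Sum.map_inl, inl_mem_blockIndex]
      omega
    · simp [blockNeg]
    · simp [blockSign, zpow_add_one₀]
    · simp only [blockNeg, Sum.map_inl, Sum.elim_inl, if_pos hw, if_pos hw']
  · exact absurd rfl hw

lemma blockPerm_mem_blockIndex (hD : D ⊆ Finset.Ioo (-m : ℤ) m) {p : ℤ ⊕ ℤ}
    (hp : p ∈ blockIndex m a D) : blockPerm m a D p ∈ blockIndex m a D := by
  rcases p with n | n
  · rw [inl_mem_blockIndex] at hp
    simp only [blockPerm]
    split_ifs with _ _ _ _ hn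
    · rw [inl_mem_blockIndex]; omega
    · rw [inl_mem_blockIndex]; omega
    · rw [inl_mem_blockIndex]; omega
    · rw [inl_mem_blockIndex]; omega
    · rwa [inr_mem_blockIndex]
    · rw [inl_mem_blockIndex]; omega
  · have hn := Finset.mem_Ioo.1 (hD (inr_mem_blockIndex.1 hp))
    simp only [blockPerm, inl_mem_blockIndex]
    omega

lemma blockPerm_blockNeg (hm : 0 < m) (hneg : ∀ d ∈ D, -d ∈ D) (p : ℤ ⊕ ℤ) :
    blockPerm m a D (blockNeg p) = blockNeg (blockPerm m a D p) := by
  rcases p with n | n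
  · have hn : -n ∈ D ↔ n ∈ D := ⟨fun h => neg_neg n ▸ hneg _ h, hneg n⟩
    simp only [blockPerm, blockNeg, Sum.map_inl, hn]
    split_ifs <;> simp <;> omega
  · simp [blockPerm, blockNeg]

lemma blockPerm_injOn (hm : 0 < m) (hD : D ⊆ Finset.Ioo (-m : ℤ) m) :
    Set.InjOn (blockPerm m a D) (blockIndex m a D) := by
  rintro (n | n) hn (n' | n') hn' h <;>
  simp only [Finset.mem_coe, inl_mem_blockIndex, inr_mem_blockIndex] at hn hn' <;>
  simp only [blockPerm] at h <;>
  grind (splits := 20)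

lemma blockTwist_isometry (hm : 0 < m) (hD : D ⊆ Finset.Ioo (-m : ℤ) m) (hneg : ∀ d ∈ D, -d ∈ D)
    (v w : blockIndex m a D → k) :
    blockForm k m a D (blockTwist k m a D v) (blockTwist k m a D w) = blockForm k m a D v w := by
  refine (isSignedInvolution_block hneg).involForm_monomialEnd
    (fun p hp => ⟨blockPerm_mem_blockIndex hD hp, blockPerm_blockNeg hm hneg p, ?_⟩)
    (blockPerm_injOn hm hD) v w
  rcases p with n | n
  · simp only [blockPerm, blockNeg, Sum.map_inl, Sum.elim_inl]
    split_ifs <;> simp only [blockSign, Sum.elim_inl, Sum.elim_inr, id, neg_one_zpow_eq_ite,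
      Int.even_iff] <;> grind
  · simpa [blockPerm, blockNeg] using! blockSign_blockNeg (k := k) (.inl n)

lemma blockEnd_inl_of_blockLink {n : ℤ} (hn : Sum.inl n ∈ blockIndex m a D) (h : BlockLink m n) :
    blockEnd k m a D (coordVec k _ (.inl n)) = coordVec k _ (.inl (n + 1)) := by
  rw [blockEnd, monomialEnd_coordVec hn]
  simp only [Sum.elim_inl, if_pos h, one_smul, Sum.map_inl]

lemma blockEnd_inl_of_not_blockLink {n : ℤ} (hn : Sum.inl n ∈ blockIndex m a D)
    (h : ¬BlockLink m n) : blockEnd k m a D (coordVec k _ (.inl n)) = 0 := by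
  rw [blockEnd, monomialEnd_coordVec hn]
  simp only [Sum.elim_inl, if_neg h, zero_smul]

lemma blockEnd_inr {d : ℤ} (hd : Sum.inr d ∈ blockIndex m a D) :
    blockEnd k m a D (coordVec k _ (.inr d)) = 0 := by
  rw [blockEnd, monomialEnd_coordVec hd]
  simp

lemma blockEnd_pow_inl {i : ℕ} (hi : i ≤ 2 * m) :
    (blockEnd k m a D ^ i) (coordVec k _ (.inl (-m))) = coordVec k _ (.inl (-m + i)) := by
  induction i with
  | zero => simp
  | succ i ih =>
    rw [pow_succ', Module.End.mul_apply, ih (by omega), blockEnd_inl_of_blockLink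
      (inl_mem_blockIndex.2 (by omega)) (by unfold BlockLink; omega), Nat.cast_succ, add_assoc]

/-- The first coordinates of the Jordan chains of `blockEnd`: the long chain, the outer chains on
the left and on the right, and the fixed vectors. -/
def blockStart (m a : ℕ) (D : Finset ℤ) : Unit ⊕ (Fin a ⊕ Fin a) ⊕ D → ℤ ⊕ ℤ
  | .inl _ => .inl (-m)
  | .inr (.inl (.inl l)) => .inl (-(m + 2 * a) + 2 * l)
  | .inr (.inl (.inr l)) => .inl (m + 1 + 2 * l)
  | .inr (.inr d) => .inr d

/-- The last coordinates of the Jordan chains of `blockEnd`. -/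
def blockStop (m a : ℕ) (D : Finset ℤ) : Unit ⊕ (Fin a ⊕ Fin a) ⊕ D → ℤ ⊕ ℤ
  | .inl _ => .inl m
  | .inr (.inl (.inl l)) => .inl (-(m + 2 * a) + 2 * l + 1)
  | .inr (.inl (.inr l)) => .inl (m + 1 + 2 * l + 1)
  | .inr (.inr d) => .inr d

/-- The lengths of the Jordan chains of `blockEnd`. -/
def blockLength (m a : ℕ) (D : Finset ℤ) : Unit ⊕ (Fin a ⊕ Fin a) ⊕ D → ℕ
  | .inl _ => 2 * m + 1
  | .inr (.inl _) => 2
  | .inr (.inr _) => 1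

lemma blockStop_mem_blockIndex (l) : blockStop m a D l ∈ blockIndex m a D := by
  rcases l with _ | (l | l) | d
  iterate 3 exact inl_mem_blockIndex.2 (by omega)
  exact inr_mem_blockIndex.2 d.2

lemma blockStop_injective : Function.Injective (blockStop m a D) := by
  rintro (_ | (l | l) | d) (_ | (l' | l') | d') h <;>
  grind [blockStop]

lemma blockEnd_blockStop (l) : blockEnd k m a D (coordVec k _ (blockStop m a D l)) = 0 := by
  have hl := blockStop_mem_blockIndex (m := m) l
  rcases l with _ | (l | l) | d
  iterate 3 exact blockEnd_inl_of_not_blockLink hl (by unfold BlockLink; omega)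
  exact blockEnd_inr hl

lemma blockEnd_pow_blockStart (l) :
    (blockEnd k m a D ^ (blockLength m a D l - 1)) (coordVec k _ (blockStart m a D l)) =
      coordVec k _ (blockStop m a D l) := by
  rcases l with _ | (l | l) | d
  · exact (blockEnd_pow_inl le_rfl).trans (congrArg _ (congrArg _ (by push_cast; ring)))
  iterate 2
    exact blockEnd_inl_of_blockLink (inl_mem_blockIndex.2 (by omega)) (by unfold BlockLink; omega)
  · rfl

lemma one_le_blockLength (l) : 1 ≤ blockLength m a D l := by
  rcases l with _ | _ | _ <;> simp [blockLength]

lemma isJordanChains_blockEnd :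
    IsJordanChains (blockEnd k m a D) (fun l => coordVec k _ (blockStart m a D l))
      (blockLength m a D) where
  pos := one_le_blockLength
  pow_eq_zero l := by
    rw [← Nat.sub_add_cancel (one_le_blockLength l), pow_succ', Module.End.mul_apply,
      blockEnd_pow_blockStart, blockEnd_blockStop]
  socle := by
    simp only [blockEnd_pow_blockStart]
    exact linearIndependent_coordVec blockStop_injective blockStop_mem_blockIndex

lemma sum_comp_blockLength (f : ℕ → ℕ) :
    ∑ l, f (blockLength m a D l) = f (2 * m + 1) + 2 * a * f 2 + D.card * f 1 := by
  simp [blockLength, two_mul, add_assoc]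

lemma hasJordanType_blockEnd : HasJordanType (blockEnd k m a D)
    ({2 * m + 1} + .replicate (2 * a) 2 + .replicate D.card 1) := by
  have hcard : ∑ l, blockLength m a D l = Module.finrank k (blockIndex m a D → k) := by
    rw [Module.finrank_fintype_fun_eq_card, Fintype.card_coe, blockIndex, Finset.card_disjSum,
      Int.card_Icc]
    have := sum_comp_blockLength (m := m) (a := a) (D := D) id
    simp only [id] at this
    omega
  intro n
  rw [isJordanChains_blockEnd.hasJordanType hcard n, Multiset.map_map]
  exact (sum_comp_blockLength (· - n)).trans (by simp [add_assoc])

lemma blockEnd_pow_inl_eq_zero {i : ℕ} (hi : 2 * m < i) :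
    (blockEnd k m a D ^ i) (coordVec k _ (.inl (-m))) = 0 :=
  pow_apply_eq_zero_of_le (isJordanChains_blockEnd.pow_eq_zero (.inl ())) hi

lemma blockEnd_pow_inr {d : ℤ} (hd : Sum.inr d ∈ blockIndex m a D) {i : ℕ} (hi : i ≠ 0) :
    (blockEnd k m a D ^ i) (coordVec k _ (.inr d)) = 0 :=
  pow_apply_eq_zero_of_le (a := 1) (by rw [pow_one, blockEnd_inr hd]) (Nat.one_le_iff_ne_zero.2 hi)

lemma blockForm_blockEnd_pow_inl (n : ℕ) :
    blockForm k m a D (coordVec k _ (.inl (-m)))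
      ((blockEnd k m a D ^ n) (coordVec k _ (.inl (-m)))) = if n = 2 * m then (-1) ^ m else 0 := by
  rcases le_or_gt n (2 * m) with hn | hn
  · rw [blockEnd_pow_inl hn, blockForm, involForm_coordVec (inl_mem_blockIndex.2 (by omega))
      (inl_mem_blockIndex.2 (by omega))]
    have hiff : (Sum.inl (-m + n : ℤ) : ℤ ⊕ ℤ) = blockNeg (.inl (-m)) ↔ n = 2 * m := by
      simp only [blockNeg, Sum.map_inl, Sum.inl.injEq]
      omega
    simp only [hiff]
    congr 1
    exact (blockSign_blockNeg (.inl m)).trans (zpow_natCast _ _)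
  · rw [blockEnd_pow_inl_eq_zero hn, map_zero, if_neg hn.ne']

lemma isOrthChains_blockEnd {i : k} (hi : i * i = -1) :
    IsOrthChains (blockForm k m a D) (blockEnd k m a D)
      (Sum.elim (fun _ : Unit => i ^ m • coordVec k _ (.inl (-m)))
        fun _ : PLift (0 ∈ D) => coordVec k _ (.inr 0))
      (Sum.elim (fun _ => m) fun _ => 0) where
  pow_eq_zero := by
    rintro (_ | h0)
    · simp [blockEnd_pow_inl_eq_zero]
    · simp [blockEnd_inr (inr_mem_blockIndex.2 h0.1)]
  pairing_self := by
    rintro (_ | h0) n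
    · have him : i ^ m * (i ^ m * (-1) ^ m) = 1 := by
        rw [← mul_assoc, ← mul_pow, ← mul_pow, hi, neg_one_mul, neg_neg, one_pow]
      simp only [Sum.elim_inl, map_smul, LinearMap.smul_apply, blockForm_blockEnd_pow_inl,
        smul_eq_mul, mul_ite, him, mul_zero]
      rfl
    · have h0 := inr_mem_blockIndex (m := m) (a := a).2 h0.1
      rcases eq_or_ne n 0 with rfl | hn
      · simp [blockForm, involForm_coordVec h0 h0, blockNeg, blockSign]
      · simp [blockEnd_pow_inr h0 hn, hn]
  pairing_of_ne := by
    have hm : Sum.inl (-m : ℤ) ∈ blockIndex m a D := inl_mem_blockIndex.2 (by omega)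
    rintro (_ | h0) (_ | h0') n hl
    · exact absurd rfl hl
    · have h0 := inr_mem_blockIndex (m := m) (a := a).2 h0'.1
      rcases eq_or_ne n 0 with rfl | hn
      · simp [blockForm, involForm_coordVec hm h0, blockNeg]
      · simp [blockEnd_pow_inr h0 hn]
    · have h0 := inr_mem_blockIndex (m := m) (a := a).2 h0.1
      rcases le_or_gt n (2 * m) with hn | hn
      · simp [blockEnd_pow_inl hn, blockForm, blockNeg,
          involForm_coordVec h0 (inl_mem_blockIndex.2 (by omega : _ ≤ -m + (n : ℤ) ∧ _))]
      · simp [blockEnd_pow_inl_eq_zero hn]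
    · exact absurd (congrArg _ (Subsingleton.elim h0 h0')) hl

lemma hasOrthonormalBasis_blockForm [CharZero k] (hi : IsSquare (-1 : k))
    (hneg : ∀ d ∈ D, -d ∈ D) : HasOrthonormalBasis (blockForm k m a D) :=
  (isSignedInvolution_block hneg).hasOrthonormalBasis hi (isSquare_blockSign hi)

lemma blockTwist_injective [CharZero k] (hi : IsSquare (-1 : k)) (hm : 0 < m)
    (hD : D ⊆ Finset.Ioo (-m : ℤ) m) (hneg : ∀ d ∈ D, -d ∈ D) :
    Function.Injective (blockTwist k m a D) := by
  refine (injective_iff_map_eq_zero _).2 fun v hv => ?_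
  refine (hasOrthonormalBasis_blockForm hi hneg).eq_zero_of_forall_apply_eq_zero fun w => ?_
  rw [← blockTwist_isometry hm hD hneg, hv, map_zero, LinearMap.zero_apply]

lemma blockTwist_inl_of_lt_neg {n : ℤ} (hn : Sum.inl n ∈ blockIndex m a D) (h : n < -m) :
    blockTwist k m a D (coordVec k _ (.inl n)) = coordVec k _ (.inl (n + 1)) := by
  rw [blockTwist, monomialEnd_coordVec hn]
  simp [blockPerm, h, show ¬(m : ℤ) < n by omega]

lemma blockTwist_inl_of_lt {n : ℤ} (hn : Sum.inl n ∈ blockIndex m a D) (h : m < n) :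
    blockTwist k m a D (coordVec k _ (.inl n)) = -coordVec k _ (.inl (n - 1)) := by
  rw [blockTwist, monomialEnd_coordVec hn]
  simp [blockPerm, h, show ¬n < (-m : ℤ) by omega]

lemma blockTwist_inl_neg :
    blockTwist k m a D (coordVec k _ (.inl (-m))) = coordVec k _ (.inl (m + 2 * a)) := by
  rw [blockTwist, monomialEnd_coordVec (inl_mem_blockIndex.2 (by omega))]
  simp [blockPerm, show ¬(m : ℤ) < 0 by omega]

lemma blockTwist_inl (hm : 0 < m) :
    blockTwist k m a D (coordVec k _ (.inl m)) = coordVec k _ (.inl (-(m + 2 * a))) := by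
  rw [blockTwist, monomialEnd_coordVec (inl_mem_blockIndex.2 (by omega))]
  simp [blockPerm, show ¬(m : ℤ) < -m by omega, show ¬(m : ℤ) = -m by omega]

lemma blockTwist_inl_of_mem (hD : D ⊆ Finset.Ioo (-m : ℤ) m) {d : ℤ} (hd : d ∈ D) :
    blockTwist k m a D (coordVec k _ (.inl d)) = coordVec k _ (.inr d) := by
  have hdm := Finset.mem_Ioo.1 (hD hd)
  rw [blockTwist, monomialEnd_coordVec (inl_mem_blockIndex.2 (by omega))]
  simp [blockPerm, hd, show ¬d < -m by omega, show ¬(m : ℤ) < d by omega,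
    show d ≠ -m by omega, show d ≠ m by omega]

lemma exists_blockEnd_pow_apply_eq_smul (hm : 0 < m) (v : blockIndex m a D → k) :
    ∃ c : k, (blockEnd k m a D ^ (2 * m)) v =
      c • (blockEnd k m a D ^ (2 * m)) (coordVec k _ (.inl (-m))) := by
  have hrank : Module.finrank k (LinearMap.range (blockEnd k m a D ^ (2 * m))) = 1 := by
    rw [hasJordanType_blockEnd]
    simp [show 2 - 2 * m = 0 by omega, show 1 - 2 * m = 0 by omega]
  have hne : (blockEnd k m a D ^ (2 * m)) (coordVec k _ (.inl (-m))) ≠ 0 := by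
    rw [blockEnd_pow_inl le_rfl]
    exact (linearIndependent_coordVec (c := fun _ : Unit => _)
      (Function.injective_of_subsingleton _) fun _ => inl_mem_blockIndex.2 (by omega)).ne_zero ()
  obtain ⟨c, hc⟩ := exists_smul_eq_of_finrank_eq_one hrank
    (x := ⟨_, LinearMap.mem_range_self _ _⟩) (Subtype.coe_ne_coe.1 hne)
    ⟨_, LinearMap.mem_range_self _ v⟩
  exact ⟨c, (congrArg Subtype.val hc).symm⟩

section Semiconj

variable {y : Module.End k (blockIndex m a D → k)}

lemma apply_blockTwist_of_semiconjBy (hy : SemiconjBy (blockTwist k m a D) (blockEnd k m a D) y)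
    (v : blockIndex m a D → k) :
    y (blockTwist k m a D v) = blockTwist k m a D (blockEnd k m a D v) :=
  (LinearMap.congr_fun hy.eq v).symm

lemma apply_inl_of_le (hy : SemiconjBy (blockTwist k m a D) (blockEnd k m a D) y) {n : ℤ}
    (hmn : m ≤ n) (hn : n < m + 2 * a) (h : (n - m) % 2 = 0) :
    y (coordVec k _ (.inl n)) = coordVec k _ (.inl (n + 1)) := by
  have hmem {n' : ℤ} (h1 : n ≤ n') (h2 : n' ≤ n + 2) : Sum.inl n' ∈ blockIndex m a D :=
    inl_mem_blockIndex.2 (by omega)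
  calc
    _ = -y (blockTwist k m a D (coordVec k _ (.inl (n + 1)))) := by
      rw [blockTwist_inl_of_lt (hmem (by omega) (by omega)) (by omega), map_neg, neg_neg,
        add_sub_cancel_right]
    _ = _ := by
      rw [apply_blockTwist_of_semiconjBy hy, blockEnd_inl_of_blockLink
        (hmem (by omega) (by omega)) (by unfold BlockLink; omega), blockTwist_inl_of_lt
        (hmem (by omega) (by omega)) (by omega), neg_neg, add_sub_cancel_right]

lemma apply_inl_of_lt_neg (hy : SemiconjBy (blockTwist k m a D) (blockEnd k m a D) y) {n : ℤ}
    (hn : -(m + 2 * a) < n) (hnm : n < -m) (h : (n - m) % 2 = 1) :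
    y (coordVec k _ (.inl n)) = coordVec k _ (.inl (n + 1)) := by
  have hmem : Sum.inl (n - 1) ∈ blockIndex m a D := inl_mem_blockIndex.2 (by omega)
  calc
    _ = y (blockTwist k m a D (coordVec k _ (.inl (n - 1)))) := by
      rw [blockTwist_inl_of_lt_neg hmem (by omega), sub_add_cancel]
    _ = _ := by
      rw [apply_blockTwist_of_semiconjBy hy, blockEnd_inl_of_blockLink hmem
        (by unfold BlockLink; omega), sub_add_cancel,
        blockTwist_inl_of_lt_neg (inl_mem_blockIndex.2 (by omega)) hnm]

lemma pow_mul_apply_inl (hy : SemiconjBy (blockTwist k m a D) (blockEnd k m a D) y) {i : ℕ}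
    (hi : i ≤ a) : ((blockEnd k m a D * y) ^ i) (coordVec k _ (.inl m)) =
      coordVec k _ (.inl (m + 2 * i)) := by
  induction i with
  | zero => simp
  | succ i ih =>
    rw [pow_succ', Module.End.mul_apply, ih (by omega), Module.End.mul_apply,
      apply_inl_of_le hy (by omega) (by omega) (by omega), blockEnd_inl_of_blockLink
      (inl_mem_blockIndex.2 (by omega)) (by unfold BlockLink; omega)]
    congr 2

lemma mul_pow_apply_inl (hy : SemiconjBy (blockTwist k m a D) (blockEnd k m a D) y) {i : ℕ}
    (hi : i ≤ a) : ((y * blockEnd k m a D) ^ i) (coordVec k _ (.inl (-(m + 2 * a)))) =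
      coordVec k _ (.inl (-(m + 2 * a) + 2 * i)) := by
  induction i with
  | zero => simp
  | succ i ih =>
    rw [pow_succ', Module.End.mul_apply, ih (by omega), Module.End.mul_apply,
      blockEnd_inl_of_blockLink (inl_mem_blockIndex.2 (by omega)) (by unfold BlockLink; omega),
      apply_inl_of_lt_neg hy (by omega) (by omega) (by omega)]
    congr 2
    push_cast
    ring

lemma pow_apply_blockTwist (hy : SemiconjBy (blockTwist k m a D) (blockEnd k m a D) y) {i : ℕ}
    (hi : i ≤ 2 * m) : (y ^ i) (coordVec k _ (.inl (m + 2 * a))) =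
      blockTwist k m a D (coordVec k _ (.inl (-m + i))) := by
  rw [← blockTwist_inl_neg, ← blockEnd_pow_inl hi]
  exact (LinearMap.congr_fun (hy.pow_right i).eq _).symm

lemma wordEnd_apply_inl (hm : 0 < m)
    (hy : SemiconjBy (blockTwist k m a D) (blockEnd k m a D) y) :
    wordEnd a (2 * m) (blockEnd k m a D) y (coordVec k _ (.inl (-m))) =
      coordVec k _ (.inl (-m)) := by
  have hx : (blockEnd k m a D ^ (2 * m)) (coordVec k _ (.inl (-m))) = coordVec k _ (.inl m) := by
    rw [blockEnd_pow_inl le_rfl]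
    congr 2
    push_cast
    ring
  have hy' : (y ^ (2 * m)) (coordVec k _ (.inl (m + 2 * a))) =
      coordVec k _ (.inl (-(m + 2 * a))) := by
    rw [pow_apply_blockTwist hy le_rfl, ← blockTwist_inl hm]
    congr 3
    push_cast
    ring
  simp only [wordEnd, Module.End.mul_apply]
  rw [hx, pow_mul_apply_inl hy le_rfl, hy', mul_pow_apply_inl hy le_rfl]
  congr 2
  ring

lemma wordEnd_apply_mem_span (hm : 0 < m)
    (hy : SemiconjBy (blockTwist k m a D) (blockEnd k m a D) y) (v : blockIndex m a D → k) :
    wordEnd a (2 * m) (blockEnd k m a D) y v ∈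
      Submodule.span k {coordVec k (blockIndex m a D) (.inl (-m))} := by
  obtain ⟨c, hc⟩ := exists_blockEnd_pow_apply_eq_smul hm v
  simp only [wordEnd, Module.End.mul_apply, hc, map_smul]
  exact Submodule.mem_span_singleton.2 ⟨c, congrArg (c • ·) (wordEnd_apply_inl hm hy).symm⟩

lemma coordVec_inl_mem_of_nonneg {U : Submodule k (blockIndex m a D → k)}
    (hy : SemiconjBy (blockTwist k m a D) (blockEnd k m a D) y)
    (hUx : U ∈ (blockEnd k m a D).invtSubmodule) (hUy : U ∈ y.invtSubmodule)
    (hU : coordVec k _ (.inl (m : ℤ)) ∈ U) {j : ℕ} (hj : j ≤ 2 * a) :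
    coordVec k _ (.inl (m + j : ℤ)) ∈ U := by
  induction j with
  | zero => simpa using hU
  | succ j ih =>
    have ih := ih (by omega)
    push_cast
    rw [← add_assoc]
    rcases Nat.even_or_odd' j with ⟨i, rfl | rfl⟩
    · rw [← apply_inl_of_le hy (by omega) (by omega) (by omega)]
      exact hUy ih
    · rw [← blockEnd_inl_of_blockLink (inl_mem_blockIndex.2 (by omega))
        (by unfold BlockLink; omega)]
      exact hUx ih

lemma coordVec_inl_mem_of_nonpos {U : Submodule k (blockIndex m a D → k)}
    (hy : SemiconjBy (blockTwist k m a D) (blockEnd k m a D) y)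
    (hUx : U ∈ (blockEnd k m a D).invtSubmodule) (hUy : U ∈ y.invtSubmodule)
    (hU : coordVec k _ (.inl (-(m + 2 * a) : ℤ)) ∈ U) {j : ℕ} (hj : j ≤ 2 * a) :
    coordVec k _ (.inl (-(m + 2 * a) + j : ℤ)) ∈ U := by
  induction j with
  | zero => simpa using hU
  | succ j ih =>
    have ih := ih (by omega)
    push_cast
    rw [← add_assoc]
    rcases Nat.even_or_odd' j with ⟨i, rfl | rfl⟩
    · rw [← blockEnd_inl_of_blockLink (inl_mem_blockIndex.2 (by omega))
        (by unfold BlockLink; omega)]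
      exact hUx ih
    · rw [← apply_inl_of_lt_neg hy (by omega) (by omega) (by omega)]
      exact hUy ih

lemma eq_top_of_coordVec_inl_mem (hm : 0 < m) (hD : D ⊆ Finset.Ioo (-m : ℤ) m)
    (hy : SemiconjBy (blockTwist k m a D) (blockEnd k m a D) y)
    {U : Submodule k (blockIndex m a D → k)} (hUx : U ∈ (blockEnd k m a D).invtSubmodule)
    (hUy : U ∈ y.invtSubmodule) (hU : coordVec k _ (.inl (-m : ℤ)) ∈ U) : U = ⊤ := by
  have hmid {n : ℤ} (h1 : -m ≤ n) (h2 : n ≤ m) : coordVec k _ (.inl n) ∈ U := by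
    obtain ⟨i, rfl⟩ : ∃ i : ℕ, n = -m + i := ⟨(n + m).toNat, by omega⟩
    rw [← blockEnd_pow_inl (by omega)]
    exact pow_apply_mem_of_mem_invtSubmodule hUx hU i
  have hright {j : ℕ} (hj : j ≤ 2 * a) : coordVec k _ (.inl (m + j : ℤ)) ∈ U :=
    coordVec_inl_mem_of_nonneg hy hUx hUy (hmid (by omega) le_rfl) hj
  have htwist {n : ℤ} (h1 : -m ≤ n) (h2 : n ≤ m) :
      blockTwist k m a D (coordVec k _ (.inl n)) ∈ U := by
    obtain ⟨i, rfl⟩ : ∃ i : ℕ, n = -m + i := ⟨(n + m).toNat, by omega⟩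
    rw [← pow_apply_blockTwist hy (by omega)]
    exact pow_apply_mem_of_mem_invtSubmodule hUy (mod_cast hright le_rfl) i
  have hleft {j : ℕ} (hj : j ≤ 2 * a) : coordVec k _ (.inl (-(m + 2 * a) + j : ℤ)) ∈ U :=
    coordVec_inl_mem_of_nonpos hy hUx hUy
      (blockTwist_inl (k := k) hm ▸ htwist (by omega) le_rfl) hj
  refine eq_top_of_coordVec_mem ?_
  rintro (n | d) hp
  · rw [inl_mem_blockIndex] at hp
    rcases lt_or_ge n (-m) with h1 | h1
    · obtain ⟨j, rfl⟩ : ∃ j : ℕ, n = -(m + 2 * a) + j := ⟨(n + (m + 2 * a)).toNat, by omega⟩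
      exact hleft (by omega)
    rcases le_or_gt n m with h2 | h2
    · exact hmid h1 h2
    · obtain ⟨j, rfl⟩ : ∃ j : ℕ, n = m + j := ⟨(n - m).toNat, by omega⟩
      exact hright (by omega)
  · rw [inr_mem_blockIndex] at hp
    have hdm := Finset.mem_Ioo.1 (hD hp)
    exact blockTwist_inl_of_mem (k := k) hD hp ▸ htwist (by omega) (by omega)

end Semiconj

lemma isCyclicallyRigid_block (hm : 0 < m) (hD : D ⊆ Finset.Ioo (-m : ℤ) m)
    {y : Module.End k (blockIndex m a D → k)}
    (hy : SemiconjBy (blockTwist k m a D) (blockEnd k m a D) y) :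
    IsCyclicallyRigid (blockEnd k m a D) y (coordVec k _ (.inl (-m))) a (2 * m) 1 where
  pos := by omega
  ne_zero := one_ne_zero
  word_self := by rw [wordEnd_apply_inl hm hy, one_smul]
  word_mem := wordEnd_apply_mem_span hm hy
  generates _ := eq_top_of_coordVec_inl_mem hm hD hy

end Block

section BlockPair

universe u

variable {k : Type u} [Field k] [CharZero k] {m a : ℕ} {D : Finset ℤ}

lemma isRigidlyRealizable_block (hi : IsSquare (-1 : k)) (hm : 0 < m)
    (hD : D ⊆ Finset.Ioo (-m : ℤ) m) (hneg : ∀ d ∈ D, -d ∈ D) :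
    IsRigidlyRealizable k ({2 * m + 1} + .replicate (2 * a) 2 + .replicate D.card 1)
      (Sum.elim (fun _ : Unit => m) fun _ : PLift (0 ∈ D) => 0) := by
  obtain ⟨i, hi'⟩ := hi
  let T := LinearEquiv.ofInjectiveEndo _ (blockTwist_injective (a := a) ⟨i, hi'⟩ hm hD hneg)
  have hx : IsSkewModel (blockForm k m a D) (blockEnd k m a D)
      ({2 * m + 1} + .replicate (2 * a) 2 + .replicate D.card 1)
      (Sum.elim (fun _ : Unit => m) fun _ : PLift (0 ∈ D) => 0) :=
    ⟨blockEnd_mem_skewAdjointSubmodule hneg, hasJordanType_blockEnd,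
      ⟨_, isOrthChains_blockEnd hi'.symm⟩⟩
  have hy : SemiconjBy (blockTwist k m a D) (blockEnd k m a D) (T.conj (blockEnd k m a D)) :=
    LinearMap.ext fun v => (congrArg (fun u => T (blockEnd k m a D u)) (T.symm_apply_apply v)).symm
  exact ⟨{ V := blockIndex m a D → k
           form := blockForm k m a D
           hasOrthonormalBasis := hasOrthonormalBasis_blockForm ⟨i, hi'⟩ hneg
           x := blockEnd k m a D
           y := T.conj (blockEnd k m a D)
           isSkewModel_x := hx
           isSkewModel_y := hx.conj (blockTwist_isometry hm hD hneg) },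
    _, _, _, _, isCyclicallyRigid_block hm hD hy⟩

end BlockPair

section Partition

@[elab_as_elim]
lemma even_count_induction {P : Multiset ℕ → Prop} (zero : P 0)
    (odd : ∀ l Λ, Odd l → P Λ → P ({l} + Λ)) (even_pair : ∀ l Λ, Even l → P Λ → P ({l, l} + Λ))
    (Λ : Multiset ℕ) (hΛ : ∀ e, Even e → Even (Λ.count e)) : P Λ := by
  induction Λ using Multiset.strongInductionOn with
  | ih Λ ih =>
  rcases Λ.empty_or_exists_mem with rfl | ⟨l, hl⟩
  · exact zero
  rcases Nat.even_or_odd l with hle | hlo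
  · have hle' : {l, l} ≤ Λ := by
      refine (Multiset.le_count_iff_replicate_le (a := l) (n := 2)).1 ?_
      obtain ⟨t, ht⟩ := hΛ l hle
      have := Multiset.count_pos.2 hl
      omega
    obtain ⟨Λ', rfl⟩ := Multiset.le_iff_exists_add.1 hle'
    refine even_pair l Λ' hle (ih Λ' (lt_add_of_pos_left _ (pos_iff_ne_zero.2 (by simp)))
      fun e he => ?_)
    have hpair : Even (({l, l} : Multiset ℕ).count e) := by
      rw [Multiset.insert_eq_cons, Multiset.count_cons, Multiset.count_singleton]
      split_ifs <;> decide
    exact (Nat.even_add.1 (by simpa only [Multiset.count_add] using hΛ e he)).1 hpair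
  · obtain ⟨Λ', rfl⟩ := Multiset.le_iff_exists_add.1 (Multiset.singleton_le.2 hl)
    refine odd l Λ' hlo (ih Λ' (lt_add_of_pos_left _ (pos_iff_ne_zero.2 (by simp))) fun e he => ?_)
    have hne : e ≠ l := fun h => Nat.not_even_iff_odd.2 hlo (h ▸ he)
    simpa only [Multiset.count_add, Multiset.count_singleton, if_neg hne, zero_add] using hΛ e he

lemma exists_eq_add_replicate_two_add_replicate_one {Λ : Multiset ℕ} (hpos : ∀ l ∈ Λ, 1 ≤ l)
    (h2 : Even (Λ.count 2)) : ∃ (Γ : Multiset ℕ) (a r : ℕ), (∀ l ∈ Γ, 3 ≤ l) ∧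
      Λ = Γ + .replicate (2 * a) 2 + .replicate r 1 := by
  obtain ⟨a, ha⟩ := h2
  refine ⟨Λ.filter (3 ≤ ·), a, Λ.count 1, fun l => Multiset.of_mem_filter, ?_⟩
  ext l
  rcases lt_or_ge l 3 with h | h
  · interval_cases l
    · simpa [Multiset.count_replicate] using fun h => absurd (hpos 0 h) (by decide)
    · simp [Multiset.count_replicate]
    · simp [Multiset.count_replicate, ha, two_mul]
  · simp [Multiset.count_replicate, h, show 2 ≠ l by omega, show 1 ≠ l by omega]

lemma sum_map_sub_two_add_two_mul_card {Λ : Multiset ℕ} (h2 : ∀ l ∈ Λ, 2 ≤ l) :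
    (Λ.map (· - 2)).sum + 2 * Λ.card = Λ.sum :=
  calc
    _ = (Λ.map fun l => l - 2 + 2).sum := by simp [Multiset.sum_map_add, mul_comm]
    _ = Λ.sum := by
      rw [Multiset.map_congr rfl fun l hl => Nat.sub_add_cancel (h2 l hl), Multiset.map_id']

lemma exists_subset_Ioo_neg_mem_card_eq {m j : ℕ} (hj : j ≤ 2 * m - 1) :
    ∃ D ⊆ Finset.Ioo (-m : ℤ) m, (∀ d ∈ D, -d ∈ D) ∧ D.card = j := by
  rcases Nat.even_or_odd' j with ⟨t, rfl | rfl⟩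
  · refine ⟨(Finset.Icc (-t : ℤ) t).erase 0, fun d hd => ?_, fun d hd => ?_, ?_⟩
    · simp only [Finset.mem_erase, Finset.mem_Icc, Finset.mem_Ioo] at hd ⊢
      omega
    · simp only [Finset.mem_erase, Finset.mem_Icc] at hd ⊢
      omega
    · rw [Finset.card_erase_of_mem (by simp), Int.card_Icc]
      omega
  · refine ⟨Finset.Icc (-t : ℤ) t, fun d hd => ?_, fun d hd => ?_, ?_⟩
    · simp only [Finset.mem_Icc, Finset.mem_Ioo] at hd ⊢
      omega
    · simp only [Finset.mem_Icc] at hd ⊢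
      omega
    · rw [Int.card_Icc]
      omega

universe u

variable {k : Type u} [Field k] {Λ : Multiset ℕ} {ι : Type} {m' : ι → ℕ}

lemma isRealizable_add_add_replicate {Γ : Multiset ℕ} {a r : ℕ}
    (hΓ : ∀ {Λ j}, IsRealizable k Λ ![] → j ≤ (Γ.map (· - 2)).sum →
      IsRealizable k ((Γ + Λ) + .replicate (2 * a) 2 + .replicate j 1) ![])
    (hΛ : ∀ {r}, r ≤ (Λ.map (· - 2)).sum + 1 → IsRealizable k (Λ + .replicate r 1) ![])
    (hr : r ≤ ((Γ + Λ).map (· - 2)).sum + 1) :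
    IsRealizable k ((Γ + Λ) + .replicate (2 * a) 2 + .replicate r 1) ![] := by
  rw [Multiset.map_add, Multiset.sum_add] at hr
  obtain ⟨j, r', hj, hr', rfl⟩ : ∃ j r', j ≤ (Γ.map (· - 2)).sum ∧
      r' ≤ (Λ.map (· - 2)).sum + 1 ∧ r = r' + j :=
    ⟨min r (Γ.map (· - 2)).sum, r - min r (Γ.map (· - 2)).sum, by omega, by omega, by omega⟩
  convert hΓ (hΛ hr') hj using 1
  rw [Multiset.replicate_add]
  abel

variable [CharZero k]

lemma isRigidlyRealizable_singleton (hi : IsSquare (-1 : k)) {m : ℕ} (hm : 0 < m) (a : ℕ) {j : ℕ}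
    (hj : j ≤ 2 * m - 1) :
    IsRigidlyRealizable k ({2 * m + 1} + .replicate (2 * a) 2 + .replicate j 1) ![m] := by
  obtain ⟨D, hD, hneg, rfl⟩ := exists_subset_Ioo_neg_mem_card_eq hj
  convert (isRigidlyRealizable_block hi hm hD hneg).comp (f := fun _ : Fin 1 => .inl ())
    (Function.injective_of_subsingleton _) using 1
  ext i
  fin_cases i
  rfl

lemma isRigidlyRealizable_pair (hi : IsSquare (-1 : k)) {m : ℕ} (hm : 0 < m) (a : ℕ) :
    IsRigidlyRealizable k ({2 * m + 1} + .replicate (2 * a) 2 + {1}) ![m, 0] := by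
  convert (isRigidlyRealizable_block (a := a) (D := {0}) hi hm (by simpa) (by simp)).comp
    (f := ![.inl (), .inr ⟨by simp⟩]) (by decide) using 1
  · simp
  · ext i
    fin_cases i <;> rfl

lemma IsRealizable.add_odd_part (hi : IsSquare (-1 : k)) (h : IsRealizable k Λ m') {m : ℕ}
    (hm : 0 < m) (a : ℕ) {j : ℕ} (hj : j ≤ 2 * m - 1) :
    IsRealizable k (({2 * m + 1} + Λ) + .replicate (2 * a) 2 + .replicate j 1) ![] := by
  convert (h.add (isRigidlyRealizable_singleton hi hm a hj)).comp (f := (Fin.elim0 : Fin 0 → _))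
    (Function.injective_of_subsingleton _) using 1
  rw [add_comm {2 * m + 1} Λ, add_assoc, add_assoc, add_assoc]

lemma IsRealizable.add_even_pair_twos (hi : IsSquare (-1 : k)) (h : IsRealizable k Λ m') {m : ℕ}
    (hm : 0 < m) (a : ℕ) :
    IsRealizable k (({2 * m + 2, 2 * m + 2} + Λ) + .replicate (2 * a) 2) ![] := by
  rw [add_assoc]
  refine .even_pair_of_fin_four hi ?_
  convert ((h.add (isRigidlyRealizable_pair hi hm a)).add (isRigidlyRealizable_pair hi hm 0)).comp
    (f := ![.inl (.inr 0), .inr 0, .inl (.inr 1), .inr 1])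
    (by simp [Function.Injective, Fin.forall_fin_succ]) using 1
  · simp only [Multiset.insert_eq_cons, ← Multiset.singleton_add, mul_zero,
      Multiset.replicate_zero]
    abel
  · ext i
    fin_cases i <;> rfl

lemma IsRealizable.add_even_pair_twos_ones (hi : IsSquare (-1 : k)) (h : IsRealizable k Λ m')
    {m : ℕ} (hm : 0 < m) (a : ℕ) {j₁ j₂ j₃ : ℕ} (h₁ : j₁ ≤ 2 * m - 1) (h₂ : j₂ ≤ 2 * m - 1)
    (h₃ : j₃ ≤ 1) :
    IsRealizable k (({2 * m + 2, 2 * m + 2} + Λ) + .replicate (2 * a) 2 +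
      .replicate (j₁ + j₂ + j₃ + 1) 1) ![] := by
  have h' := (((h.add (isRigidlyRealizable_singleton hi hm a h₁)).add
    (isRigidlyRealizable_singleton hi hm 0 h₂)).add
    (isRigidlyRealizable_singleton hi one_pos 0 h₃)).comp
    (f := ![.inl (.inl (.inr 0)), .inl (.inr 0), .inr 0])
    (by simp [Function.Injective, Fin.forall_fin_succ])
  convert IsRealizable.even_pair_of_fin_three (l := m)
    (Λ := Λ + .replicate (2 * a) 2 + .replicate (j₁ + j₂ + j₃) 1) hi hm ?_ using 1
  · simp only [Multiset.insert_eq_cons, ← Multiset.singleton_add, Multiset.replicate_add,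
      Multiset.replicate_one]
    abel
  convert h' using 1
  · simp only [Multiset.insert_eq_cons, ← Multiset.singleton_add, Multiset.replicate_add,
      mul_zero, Multiset.replicate_zero]
    abel_nf
  · ext i
    fin_cases i <;> rfl

lemma isRealizable_replicate_one {r : ℕ} (hr : r ≤ 1) :
    IsRealizable k (.replicate r 1) ![] := by
  have hB : HasOrthonormalBasis (Matrix.toBilin' (1 : Matrix (Fin r) (Fin r) k)) :=
    .of_basis (Pi.basisFun k (Fin r)) fun i j => by simp [Matrix.one_apply]
  have h0 : IsSkewModel (Matrix.toBilin' (1 : Matrix (Fin r) (Fin r) k)) 0 (.replicate r 1) ![] :=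
    .of_isEmpty (zero_mem _) fun n => by
      rcases n with _ | n
      · rw [pow_zero, Module.End.one_eq_id, LinearMap.range_id, finrank_top]
        simp
      · simp
  refine ⟨⟨Fin r → k, _, hB, 0, 0, h0, h0⟩, fun A hA _ _ => ?_⟩
  obtain ⟨c, rfl⟩ : ∃ c : k, A = c • 1 := by
    interval_cases r
    · exact ⟨0, Subsingleton.elim _ _⟩
    · exact (A.existsUnique_eq_smul_id_of_finrank_eq_one (by simp)).exists
  exact hB.smul_one_eq_zero_of_mem_skewAdjointSubmodule hA

lemma IsRealizable.add_even_pair (hi : IsSquare (-1 : k)) (h : IsRealizable k Λ ![]) {l : ℕ}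
    (hl : Even l) (hl3 : 3 ≤ l) (a : ℕ) {j : ℕ} (hj : j ≤ (l - 2) + (l - 2)) :
    IsRealizable k (({l, l} + Λ) + .replicate (2 * a) 2 + .replicate j 1) ![] := by
  obtain ⟨m, rfl, hm⟩ : ∃ m, l = 2 * m + 2 ∧ 0 < m := by
    obtain ⟨t, rfl⟩ := hl
    exact ⟨t - 1, by omega, by omega⟩
  obtain rfl | ⟨j₁, j₂, j₃, h₁, h₂, h₃, rfl⟩ : j = 0 ∨ ∃ j₁ j₂ j₃, j₁ ≤ 2 * m - 1 ∧
      j₂ ≤ 2 * m - 1 ∧ j₃ ≤ 1 ∧ j = j₁ + j₂ + j₃ + 1 := by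
    rcases Nat.eq_zero_or_pos j with hj0 | hj0
    · exact .inl hj0
    · exact .inr ⟨min (j - 1) (2 * m - 1), min (j - 1 - min (j - 1) (2 * m - 1)) (2 * m - 1),
        j - 1 - 2 * (2 * m - 1), by omega, by omega, by omega, by omega⟩
  · simpa using h.add_even_pair_twos hi hm a
  · exact h.add_even_pair_twos_ones hi hm a h₁ h₂ h₃

theorem isRealizable_add_replicate (hi : IsSquare (-1 : k)) (h3 : ∀ l ∈ Λ, 3 ≤ l)
    (hev : ∀ e, Even e → Even (Λ.count e)) {a r : ℕ} (ha : Λ = 0 → a = 0)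
    (hr : r ≤ (Λ.map (· - 2)).sum + 1) :
    IsRealizable k (Λ + .replicate (2 * a) 2 + .replicate r 1) ![] := by
  revert h3 a r
  refine even_count_induction ?_ ?_ ?_ Λ hev
  · intro _ a r ha hr
    simpa [ha] using isRealizable_replicate_one (k := k) (by simpa using hr)
  · rintro l Λ ⟨m, rfl⟩ ih h3 a r _ hr
    simp only [Multiset.mem_add, Multiset.mem_singleton, or_imp, forall_and, forall_eq] at h3
    have hm : 0 < m := by omega
    refine isRealizable_add_add_replicate (fun h hj => h.add_odd_part hi hm a ?_) (fun hr => ?_) hr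
    · simpa using hj
    · simpa using ih h3.2 (a := 0) (fun _ => rfl) hr
  · intro l Λ hl ih h3 a r _ hr
    have hl3 : 3 ≤ l := h3 l (by simp)
    refine isRealizable_add_add_replicate (fun h hj => h.add_even_pair hi hl hl3 a ?_)
      (fun hr => ?_) hr
    · simpa using hj
    · simpa using ih (fun l hl => h3 l (by simp [hl])) (a := 0) (fun _ => rfl) hr

theorem isRealizable_of_two_mul_card_le (hi : IsSquare (-1 : k)) (hpos : ∀ l ∈ Λ, 1 ≤ l)
    (hev : ∀ e, Even e → Even (Λ.count e)) (h3 : ∃ l ∈ Λ, 3 ≤ l)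
    (hcard : 2 * Λ.card ≤ Λ.sum + 1) : IsRealizable k Λ ![] := by
  obtain ⟨Γ, a, r, hΓ, rfl⟩ := exists_eq_add_replicate_two_add_replicate_one hpos (hev 2 even_two)
  have hsum := sum_map_sub_two_add_two_mul_card fun l hl => (by decide : 2 ≤ 3).trans (hΓ l hl)
  refine isRealizable_add_replicate hi hΓ (fun e he => ?_) (fun h0 => ?_) ?_
  · have hcount := hev e he
    have h1 : e ≠ 1 := by rintro rfl; exact Nat.not_even_one he
    simp only [Multiset.count_add, Multiset.count_replicate, if_neg h1.symm] at hcount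
    grind
  · obtain ⟨l, hl, hl3⟩ := h3
    simp only [h0, zero_add, Multiset.mem_add, Multiset.mem_replicate] at hl
    omega
  · simp only [Multiset.card_add, Multiset.card_replicate, Multiset.sum_add,
      Multiset.sum_replicate, smul_eq_mul, mul_one] at hcard
    omega

end Partition

theorem stmt5_general {k : Type*} [Field k] [CharZero k] (hi : IsSquare (-1 : k))
    {N p : ℕ} (lam : Fin p → ℕ) (hpos : ∀ l, 1 ≤ lam l) (hsum : ∑ l, lam l = N)
    (horth : IsOrthogonalParts lam) (h3 : ∃ l, 3 ≤ lam l) (hbig : N / 2 ≤ N - p) :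
    zClosure (Set.image2 (· + ·) (jordanOrbit k N lam ∩ soSet k N)
        (jordanOrbit k N lam ∩ soSet k N))
      = soSet k N := by
  have hN : 3 ≤ N :=
    have ⟨l, hl⟩ := h3
    hl.trans (hsum ▸ Finset.single_le_sum (fun _ _ => Nat.zero_le _) (Finset.mem_univ l))
  refine IsRealizable.zClosure_eq_soSet hi hN hsum
    (isRealizable_of_two_mul_card_le hi (by simpa using hpos) (fun e he => ?_)
      (by simpa using h3) ?_)
  · rcases Nat.eq_zero_or_pos e with rfl | he0
    · have h0 : 0 ∉ Finset.univ.val.map lam := by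
        simpa using fun l => Nat.one_le_iff_ne_zero.1 (hpos l)
      rw [Multiset.count_eq_zero_of_notMem h0]
      exact Even.zero
    · rw [Multiset.count_map]
      simpa [eq_comm] using! horth e he0 he
  · rw [Multiset.card_map, Finset.card_val, Finset.card_univ, Fintype.card_fin]
    change 2 * p ≤ ∑ l, lam l + 1
    omega

/-- For an orthogonal partition `λ` of `N ≥ 7` with `λ₁ ≥ 3` and `N − p ≥ ⌊N/2⌋`, the
conical secant variety of the nilpotent orbit `O_λ ∩ so_N` is all of `so_N`. -/
theorem stmt5 {k : Type*} [Field k] [IsAlgClosed k] [CharZero k]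
    {N p : ℕ} (hN : 7 ≤ N) (hp : 0 < p) (lam : Fin p → ℕ)
    (hanti : Antitone lam) (hpos : ∀ l, 1 ≤ lam l)
    (hsum : ∑ l, lam l = N)
    (horth : IsOrthogonalParts lam)
    (hl1 : 3 ≤ lam ⟨0, hp⟩)
    (hbig : N / 2 ≤ N - p) :
    zClosure (Set.image2 (· + ·) (jordanOrbit k N lam ∩ soSet k N)
        (jordanOrbit k N lam ∩ soSet k N))
      = soSet k N :=
  stmt5_general (IsAlgClosed.exists_eq_mul_self _) lam hpos hsum horth ⟨_, hl1⟩ hbig
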